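/- arXiv:1607.07171 — 7 statements merged into one kernel-verified Lean document; each statement's English description precedes it below -/
import Mathlib

section
/- Let q = qᴿ + qᴵ·i be a Gaussian prime with qᴿ > qᴵ ≥ 1. Then every valid symbol w satisfies 2·N(w) ≤ N(q) − 2·qᴿ + 1, and the Gaussian integer w* = (qᴿ − qᴵ − 1)/2 + ((qᴿ + qᴵ − 1)/2)·i (whose coordinates are integers since qᴿ + qᴵ is odd) is a valid symbol attaining equality. -/
open GaussianInt

/-- A Gaussian integer `w` is a valid symbol (representative element of `ℤ[i]/q`) if both of
its coordinates in the rotated basis `(q/|q|, i·q/|q|)` have absolute value less than `|q|/2`,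
i.e. `2·|Re(w·q̄)| < N(q)` and `2·|Im(w·q̄)| < N(q)`. -/
def IsValidSymbol (q w : GaussianInt) : Prop :=
  2 * |(w * star q).re| < q.norm ∧ 2 * |(w * star q).im| < q.norm

theorem aux_core (a b x y : ℤ) (hb : 1 ≤ b) (hab : b < a) (hodd : (a + b) % 2 = 1)
    (hx : 0 ≤ x) (hy : 0 ≤ y) (hu : 2 * (x * a + y * b) < a * a + b * b)
    (hv : 2 * (y * a - x * b) < a * a + b * b) :
    2 * (x * x + y * y) ≤ a * a + b * b - 2 * a + 1 := by
  obtain ⟨k, hk⟩ : ∃ k, a - b - 2 * x = 2 * k + 1 := ⟨(a - b - 2 * x) / 2, by omega⟩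
  obtain ⟨m, hm⟩ : ∃ m, a + b - 2 * y = 2 * m + 1 := ⟨(a + b - 2 * y) / 2, by omega⟩
  have hU : 0 < (2 * k + 1) * a + (2 * m + 1) * b := by
    rw [← hk, ← hm]; nlinarith
  have hV : 0 < (2 * m + 1) * a - (2 * k + 1) * b := by
    rw [← hk, ← hm]; nlinarith
  have hm0 : 0 ≤ m := by
    by_contra h
    have h' : 2 * m + 1 ≤ -1 := by omega
    have e1 := mul_pos (show 0 < b by omega) hU
    have e2 := mul_pos (show 0 < a by omega) hV
    nlinarith [mul_nonneg (show 0 ≤ -(2 * m + 1) by omega) (add_nonneg (mul_self_nonneg a) (mul_self_nonneg b))]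
  obtain rfl : a = x + y + k + m + 1 := by omega
  obtain rfl : b = y - x + m - k := by omega
  by_cases hk0 : 0 ≤ k
  · nlinarith [mul_nonneg hk0 hx, mul_nonneg hm0 hy, mul_self_nonneg k, mul_self_nonneg m]
  · have hkm : 0 ≤ m + k := by
      by_contra h
      nlinarith [mul_nonneg (show 0 ≤ -(2 * k + 1) by omega) (show 0 ≤ (x + y + k + m + 1) - (y - x + m - k) by omega), mul_nonneg (show 0 ≤ -(2 * k + 2 * m + 2) by omega) (show 0 ≤ (y - x + m - k) by omega)]
    -- r = 2m+1 exceeds -(2k+1), and b > -(k+1/2)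
    have hkm' : 0 ≤ m + k := hkm
    have hkb : 0 ≤ (y - x + m - k) + k := by
      by_contra h
      have h3 : (y - x + m - k) + k ≤ -1 := by omega
      nlinarith [mul_nonneg (show 0 ≤ -(2 * k + 1) - 2 * (y - x + m - k) by omega) (show 0 ≤ x + y + k + m + 1 by omega), mul_nonneg hy (show 0 ≤ (y - x + m - k) by omega)]
    nlinarith [mul_nonneg hkb (show 0 ≤ -k by omega), mul_nonneg hkm hy]

theorem aux_odd (q : GaussianInt) (hq : Prime q) (h1 : 1 ≤ q.im) (h2 : q.im < q.re) :
    (q.re + q.im) % 2 = 1 := by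
  by_contra h
  obtain ⟨c, hc⟩ : ∃ c, q.re + q.im = 2 * c := ⟨(q.re + q.im) / 2, by omega⟩
  have hz : q = (⟨1, 1⟩ : GaussianInt) * ⟨c, q.im - c⟩ := by
    ext
    · simp; omega
    · simp
  have hN : ∀ z : GaussianInt, IsUnit z → z.re * z.re + z.im * z.im = 1 := by
    intro z hz
    have := (Zsqrtd.norm_eq_one_iff' (by norm_num) z).2 hz
    rw [Zsqrtd.norm_def] at this
    linarith
  rcases hq.irreducible.isUnit_or_isUnit hz with h | h
  · have := hN _ h
    simp at this
  · have := hN _ h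
    simp only at this
    nlinarith

theorem stmt2 (q : GaussianInt) (hq : Prime q) (h1 : 1 ≤ q.im) (h2 : q.im < q.re) :
    (∀ w : GaussianInt, IsValidSymbol q w → 2 * w.norm ≤ q.norm - 2 * q.re + 1) ∧
    (∃ wstar : GaussianInt,
      2 * wstar.re = q.re - q.im - 1 ∧ 2 * wstar.im = q.re + q.im - 1 ∧
      IsValidSymbol q wstar ∧ 2 * wstar.norm = q.norm - 2 * q.re + 1) := by
  have ho := aux_odd q hq h1 h2
  have hn : ∀ z : GaussianInt, z.norm = z.re * z.re + z.im * z.im := by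
    intro z; rw [Zsqrtd.norm_def]; ring
  have hval : ∀ w : GaussianInt, IsValidSymbol q w ↔
      2 * |w.re * q.re + w.im * q.im| < q.re * q.re + q.im * q.im ∧
      2 * |w.im * q.re - w.re * q.im| < q.re * q.re + q.im * q.im := by
    intro w
    have e1 : (w * star q).re = w.re * q.re + w.im * q.im := by simp
    have e2 : (w * star q).im = w.im * q.re - w.re * q.im := by simp; ring
    rw [IsValidSymbol, e1, e2, hn]
  constructor
  · intro w hw
    rw [hval] at hw
    obtain ⟨hu, hv⟩ := hw
    have u1 := le_abs_self (w.re * q.re + w.im * q.im)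
    have u2 := neg_abs_le (w.re * q.re + w.im * q.im)
    have v1 := le_abs_self (w.im * q.re - w.re * q.im)
    have v2 := neg_abs_le (w.im * q.re - w.re * q.im)
    rw [hn, hn]
    rcases le_total 0 w.re with hx | hx <;> rcases le_total 0 w.im with hy | hy
    · exact aux_core _ _ _ _ h1 h2 ho hx hy (by linarith) (by linarith)
    · have := aux_core q.re q.im (-w.im) w.re h1 h2 ho (by linarith) hx (by linarith) (by linarith)
      linarith
    · have := aux_core q.re q.im w.im (-w.re) h1 h2 ho hy (by linarith) (by linarith) (by linarith)
      linarith
    · have := aux_core q.re q.im (-w.re) (-w.im) h1 h2 ho (by linarith) (by linarith)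
        (by linarith) (by linarith)
      linarith
  · obtain ⟨x, hx⟩ : ∃ x, 2 * x = q.re - q.im - 1 := ⟨(q.re - q.im - 1) / 2, by omega⟩
    obtain ⟨y, hy⟩ : ∃ y, 2 * y = q.re + q.im - 1 := ⟨(q.re + q.im - 1) / 2, by omega⟩
    have e1 : 2 * (x * q.re + y * q.im) = q.re * q.re + q.im * q.im - q.re - q.im := by
      linear_combination q.re * hx + q.im * hy
    have e2 : 2 * (y * q.re - x * q.im) = q.re * q.re + q.im * q.im - q.re + q.im := by
      linear_combination q.re * hy - q.im * hx
    refine ⟨⟨x, y⟩, hx, hy, (hval _).2 ⟨?_, ?_⟩, ?_⟩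
    · simp only
      rw [abs_of_nonneg] <;> nlinarith
    · simp only
      rw [abs_of_nonneg] <;> nlinarith
    · rw [hn, hn]
      have : 2 * (2 * (x * x + y * y)) = 2 * (q.re * q.re + q.im * q.im - 2 * q.re + 1) := by
        linear_combination (2 * x + q.re - q.im - 1) * hx + (2 * y + q.re + q.im - 1) * hy
      exact mul_left_cancel₀ two_ne_zero this
end

section
/- Let q be a Gaussian prime with N(q) ≥ 5. Every Gaussian integer δ with N(δ) < N(q) is a valid difference, i.e., δ = w − w′ for some valid symbols w, w′. In particular, every pair (δ_A, δ_B) ≠ (0, 0) with N(δ_A) < N(q) and N(δ_B) < N(q) is a distance-valid difference pair. -/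
open GaussianInt

/-- A Gaussian integer `δ` is a valid difference if `δ = w − w′` for valid symbols `w, w′`. -/
def IsValidDiff (q δ : GaussianInt) : Prop :=
  ∃ w w' : GaussianInt, IsValidSymbol q w ∧ IsValidSymbol q w' ∧ δ = w - w'

/-- `(δA, δB)` is a distance-valid difference pair if both components are valid differences
and `(δA, δB) ≠ (0, 0)`. -/
def IsDistanceValidPair (q δA δB : GaussianInt) : Prop :=
  IsValidDiff q δA ∧ IsValidDiff q δB ∧ (δA, δB) ≠ (0, 0)

/-- Integer-coordinate form of the valid difference condition. -/
def GoodDiff (c d u v : ℤ) : Prop :=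
  ∃ x y : ℤ, 2 * |x * c + y * d| < c * c + d * d ∧ 2 * |y * c - x * d| < c * c + d * d ∧
    2 * |(x - u) * c + (y - v) * d| < c * c + d * d ∧
    2 * |(y - v) * c - (x - u) * d| < c * c + d * d

theorem GoodDiff.of_rot {c d u v : ℤ} (h : GoodDiff c d (-v) u) : GoodDiff c d u v := by
  obtain ⟨x, y, h1, h2, h3, h4⟩ := h
  refine ⟨y, -x, ?_, ?_, ?_, ?_⟩
  · convert h2 using 3; ring
  · rw [← abs_neg]; convert h1 using 3; ring
  · convert h4 using 3; ring
  · rw [← abs_neg]; convert h3 using 3; ring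

theorem GoodDiff.of_conj {c d u v : ℤ} (h : GoodDiff c (-d) u (-v)) : GoodDiff c d u v := by
  obtain ⟨x, y, h1, h2, h3, h4⟩ := h
  rw [neg_mul_neg] at h1 h2 h3 h4
  refine ⟨x, -y, ?_, ?_, ?_, ?_⟩
  · convert h1 using 3; ring
  · rw [← abs_neg]; convert h2 using 3; ring
  · convert h3 using 3; ring
  · rw [← abs_neg]; convert h4 using 3; ring

/-- Build a `GoodDiff` from linear bounds on the coordinates. -/
theorem GoodDiff.mk' {c d u v : ℤ} (x y : ℤ) (p X Y a b : ℤ) (hp : p = c * c + d * d)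
    (hX : X = x * c + y * d) (hY : Y = y * c - x * d)
    (ha : a = u * c + v * d) (hb : b = v * c - u * d)
    (h1 : 2 * X < p) (h2 : -p < 2 * X) (h3 : 2 * Y < p) (h4 : -p < 2 * Y)
    (h5 : 2 * (X - a) < p) (h6 : -p < 2 * (X - a)) (h7 : 2 * (Y - b) < p)
    (h8 : -p < 2 * (Y - b)) : GoodDiff c d u v := by
  have e3 : (x - u) * c + (y - v) * d = X - a := by rw [hX, ha]; ring
  have e4 : (y - v) * c - (x - u) * d = Y - b := by rw [hY, hb]; ring
  refine ⟨x, y, ?_, ?_, ?_, ?_⟩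
  · rw [← hX, ← hp]; have := abs_lt.2 (⟨by omega, by omega⟩ : -(p) < 2 * X ∧ 2 * X < p)
    rwa [abs_mul] at this
  · rw [← hY, ← hp]; have := abs_lt.2 (⟨by omega, by omega⟩ : -(p) < 2 * Y ∧ 2 * Y < p)
    rwa [abs_mul] at this
  · rw [e3, ← hp]; have := abs_lt.2 (⟨by omega, by omega⟩ : -(p) < 2 * (X-a) ∧ 2 * (X-a) < p)
    rwa [abs_mul] at this
  · rw [e4, ← hp]; have := abs_lt.2 (⟨by omega, by omega⟩ : -(p) < 2 * (Y-b) ∧ 2 * (Y-b) < p)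
    rwa [abs_mul] at this

/-- Decision procedure for small cases: try the four roundings of `δ / 2`. -/
def smallTest (c d u v : ℤ) : Bool :=
  let p := c * c + d * d
  let a := u * c + v * d
  let b := v * c - u * d
  let t : ℤ → ℤ → Bool := fun x y =>
    let X := x * c + y * d
    let Y := y * c - x * d
    decide (2 * X < p) && decide (-p < 2 * X) && decide (2 * Y < p) && decide (-p < 2 * Y) &&
    decide (2 * (X - a) < p) && decide (-p < 2 * (X - a)) && decide (2 * (Y - b) < p) &&
    decide (-p < 2 * (Y - b))
  decide (p ≤ u * u + v * v) || decide (b < 0) ||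
    decide (a < b) ||
    t (u / 2) (v / 2) || t ((u + 1) / 2) (v / 2) || t (u / 2) ((v + 1) / 2) ||
    t ((u + 1) / 2) ((v + 1) / 2) ||
    ([-2, -1, 0, 1, 2, 3] : List ℤ).any fun i => ([-2, -1, 0, 1, 2, 3] : List ℤ).any fun j =>
      t (u / 2 + i) (v / 2 + j)

theorem smallTest_all : ∀ c : Fin 12, ∀ d : Fin 12,
    ((((c.1 * c.1 + d.1 * d.1) % 2 == 0) || Nat.ble 128 (c.1 * c.1 + d.1 * d.1)) ||
      ((List.range 23).all fun u => (List.range 12).all fun v =>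
        smallTest (c.1 : ℤ) (d.1 : ℤ) ((u : ℤ) - 11) (v : ℤ))) = true := by
  decide +kernel

theorem small_case_pos {c d u v : ℤ} (hodd : (c * c + d * d) % 2 = 1) (hp : c * c + d * d < 128)
    (hc : 0 ≤ c) (hd : 0 ≤ d)
    (hn : u * u + v * v < c * c + d * d) (hb : 0 ≤ v * c - u * d)
    (hab : v * c - u * d ≤ u * c + v * d) :
    GoodDiff c d u v := by
  have bd : ∀ z w : ℤ, z * z + w * w < 128 → -11 ≤ z ∧ z ≤ 11 := by
    intro z w h; constructor <;> nlinarith [mul_self_nonneg w]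
  obtain ⟨-, c2⟩ := bd c d hp
  obtain ⟨-, d2⟩ := bd d c (by linarith)
  obtain ⟨u1, u2⟩ := bd u v (by linarith)
  obtain ⟨-, v2⟩ := bd v u (by linarith)
  have hv : 0 ≤ v := by
    have e : v * (c * c + d * d) = d * (u * c + v * d) + c * (v * c - u * d) := by ring
    have h1 := mul_nonneg hd (hb.trans hab)
    have h2 := mul_nonneg hc hb
    have h3 := mul_self_nonneg u
    have h4 := mul_self_nonneg v
    exact nonneg_of_mul_nonneg_left (by rw [e]; linarith) (show 0 < c * c + d * d by linarith)
  obtain ⟨c, rfl⟩ := Int.eq_ofNat_of_zero_le hc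
  obtain ⟨d, rfl⟩ := Int.eq_ofNat_of_zero_le hd
  obtain ⟨v, rfl⟩ := Int.eq_ofNat_of_zero_le hv
  have key := smallTest_all ⟨c, by omega⟩ ⟨d, by omega⟩
  rw [Bool.or_eq_true, Bool.or_eq_true] at key
  rcases key with (key | key) | key
  · exfalso
    simp only [beq_iff_eq] at key
    have : (((c * c + d * d) % 2 : ℕ) : ℤ) = 0 := by rw [key]; rfl
    push_cast at this
    omega
  · exfalso
    have key := Nat.le_of_ble_eq_true key
    have : ((128 : ℕ) : ℤ) ≤ ((c * c + d * d : ℕ) : ℤ) := by exact_mod_cast key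
    push_cast at this
    omega
  rw [List.all_eq_true] at key
  have key := key (u + 11).toNat (List.mem_range.2 (by omega))
  rw [List.all_eq_true] at key
  have key := key v (List.mem_range.2 (by omega))
  rw [show (((u + 11).toNat : ℤ) - 11) = u by omega] at key
  simp only [smallTest, Bool.or_eq_true, Bool.and_eq_true, decide_eq_true_eq, beq_iff_eq,
    List.any_eq_true] at key
  rcases key with (((((((k | k) | k) | k) | k) | k) | k) | k)
  · omega
  · omega
  · omega
  pick_goal 5
  · obtain ⟨i, -, j, -, k⟩ := k
    obtain ⟨⟨⟨⟨⟨⟨⟨k1, k2⟩, k3⟩, k4⟩, k5⟩, k6⟩, k7⟩, k8⟩ := k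
    exact GoodDiff.mk' _ _ _ _ _ _ _ rfl rfl rfl rfl rfl k1 k2 k3 k4 k5 k6 k7 k8
  all_goals
    obtain ⟨⟨⟨⟨⟨⟨⟨k1, k2⟩, k3⟩, k4⟩, k5⟩, k6⟩, k7⟩, k8⟩ := k
    exact GoodDiff.mk' _ _ _ _ _ _ _ rfl rfl rfl rfl rfl k1 k2 k3 k4 k5 k6 k7 k8

theorem GoodDiff.of_unit {c d u v : ℤ} (h : GoodDiff (-d) c (-v) u) : GoodDiff c d u v := by
  obtain ⟨x, y, h1, h2, h3, h4⟩ := h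
  have e : -d * -d + c * c = c * c + d * d := by ring
  rw [e] at h1 h2 h3 h4
  refine ⟨y, -x, ?_, ?_, ?_, ?_⟩
  · convert h1 using 3; ring
  · convert h2 using 3; ring
  · convert h3 using 3; ring
  · convert h4 using 3; ring

theorem small_case {c d u v : ℤ} (hodd : (c * c + d * d) % 2 = 1) (hp : c * c + d * d < 128)
    (hn : u * u + v * v < c * c + d * d) (hb : 0 ≤ v * c - u * d)
    (hab : v * c - u * d ≤ u * c + v * d) :
    GoodDiff c d u v := by
  rcases le_total 0 c with hc | hc <;> rcases le_total 0 d with hd | hd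
  · exact small_case_pos hodd hp hc hd hn hb hab
  · apply GoodDiff.of_unit
    apply small_case_pos <;> first | linarith | (ring_nf at hodd ⊢; omega)
  · apply GoodDiff.of_unit
    apply GoodDiff.of_unit
    apply GoodDiff.of_unit
    apply small_case_pos <;> first | linarith | (ring_nf at hodd ⊢; omega)
  · apply GoodDiff.of_unit
    apply GoodDiff.of_unit
    apply small_case_pos <;> first | linarith | (ring_nf at hodd ⊢; omega)

/-- Rounding half of an integer multiple: nearest point to `δ / 2` along with the offset. -/
theorem round_case {c d u v : ℤ}
    (h1 : u * c + v * d + |c| + |d| < c * c + d * d) (h2 : v * c - u * d + |c| + |d| < c * c + d * d)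
    (hb : 0 ≤ v * c - u * d) (ha : 0 ≤ u * c + v * d) : GoodDiff c d u v := by
  obtain ⟨x, e, hx, he⟩ : ∃ x e : ℤ, 2 * x = u + e ∧ (e = 0 ∨ e = 1) :=
    ⟨(u + 1) / 2, 2 * ((u + 1) / 2) - u, by ring, by omega⟩
  obtain ⟨y, f, hy, hf⟩ : ∃ y f : ℤ, 2 * y = v + f ∧ (f = 0 ∨ f = 1) :=
    ⟨(v + 1) / 2, 2 * ((v + 1) / 2) - v, by ring, by omega⟩
  have eX : 2 * (x * c + y * d) = u * c + v * d + (e * c + f * d) := by linear_combination c * hx + d * hy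
  have eY : 2 * (y * c - x * d) = v * c - u * d + (f * c - e * d) := by linear_combination c * hy - d * hx
  have c1 := le_abs_self c
  have c2 := neg_abs_le c
  have d1 := le_abs_self d
  have d2 := neg_abs_le d
  have := abs_nonneg c
  have := abs_nonneg d
  have b1 : e * c + f * d ≤ |c| + |d| := by
    rcases he with rfl | rfl <;> rcases hf with rfl | rfl <;> linarith
  have b2 : -(|c| + |d|) ≤ e * c + f * d := by
    rcases he with rfl | rfl <;> rcases hf with rfl | rfl <;> linarith
  have b3 : f * c - e * d ≤ |c| + |d| := by
    rcases he with rfl | rfl <;> rcases hf with rfl | rfl <;> linarith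
  have b4 : -(|c| + |d|) ≤ f * c - e * d := by
    rcases he with rfl | rfl <;> rcases hf with rfl | rfl <;> linarith
  apply GoodDiff.mk' x y _ _ _ _ _ rfl rfl rfl rfl rfl <;> linarith

/-- If both rotated coordinates are even then `δ` is twice a valid symbol. -/
theorem even_case {c d u v : ℤ} (hodd : (c * c + d * d) % 2 = 1)
    (hb : 0 ≤ v * c - u * d) (hab : v * c - u * d ≤ u * c + v * d)
    (hap : u * c + v * d < c * c + d * d)
    (ea : (u * c + v * d) % 2 = 0) (eb : (v * c - u * d) % 2 = 0) : GoodDiff c d u v := by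
  have hpar : c % 2 = 1 ∧ d % 2 = 0 ∨ c % 2 = 0 ∧ d % 2 = 1 := by
    rcases Int.emod_two_eq_zero_or_one c with h | h <;>
    rcases Int.emod_two_eq_zero_or_one d with h' | h' <;>
    simp [Int.add_emod, Int.mul_emod, h, h'] at hodd ⊢
  have hu : u % 2 = 0 ∧ v % 2 = 0 := by
    rcases hpar with ⟨h, h'⟩ | ⟨h, h'⟩ <;>
    simp [Int.add_emod, Int.sub_emod, Int.mul_emod, h, h'] at ea eb ⊢ <;> omega
  obtain ⟨x, rfl⟩ : ∃ x, u = 2 * x := ⟨u / 2, by omega⟩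
  obtain ⟨y, rfl⟩ : ∃ y, v = 2 * y := ⟨v / 2, by omega⟩
  apply GoodDiff.mk' x y _ _ _ _ _ rfl rfl rfl rfl rfl <;> nlinarith

theorem thin_arith {m b κ p G : ℤ} (hm2 : 2 ≤ m) (hp128 : 128 ≤ p) (hb2 : 2 * b < p)
    (B1 : (m - 1) * κ ≤ b - 1) (B2 : -(b - 1) ≤ (m - 1) * κ) (hkn : p ≤ κ * κ + 1)
    (hsum : m * m + b * b < 2 * m * p) (hdiv : b + m * κ = p * G) : False := by
  have hb1 : 1 ≤ b := by linarith
  have Q : (m - 1) * (m - 1) * (p - 1) < 2 * m * p := by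
    have q1 : ((m - 1) * κ) * ((m - 1) * κ) ≤ (b - 1) * (b - 1) := by
      have := sq_le_sq' B2 B1
      rwa [sq, sq] at this
    have q2 : (m - 1) * (m - 1) * (p - 1) ≤ (m - 1) * (m - 1) * (κ * κ) :=
      mul_le_mul_of_nonneg_left (by linarith) (mul_self_nonneg _)
    have q3 : ((m - 1) * κ) * ((m - 1) * κ) = (m - 1) * (m - 1) * (κ * κ) := by ring
    have q4 : (b - 1) * (b - 1) ≤ b * b := mul_self_le_mul_self (by omega) (by omega)
    have := mul_self_nonneg m
    linarith
  have hm3 : m ≤ 4 := by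
    by_contra hc
    have h5 : 5 ≤ m := by omega
    have r1 : 3 * m + 1 ≤ (m - 1) * (m - 1) := by nlinarith only [h5]
    have r2 : (3 * m + 1) * (p - 1) ≤ (m - 1) * (m - 1) * (p - 1) :=
      mul_le_mul_of_nonneg_right r1 (by omega)
    have r3 : (3 * m + 1) * (p - 1) < 2 * m * p := by linarith
    nlinarith only [r3, h5, hp128]
  have K : -(b - 1) ≤ κ ∧ κ ≤ b - 1 := by
    rcases le_total 0 κ with hk | hk
    · have : 0 ≤ (m - 2) * κ := mul_nonneg (by omega) hk
      constructor <;> linarith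
    · have : (m - 2) * κ ≤ 0 := mul_nonpos_of_nonneg_of_nonpos (by omega) hk
      constructor <;> linarith
  have M1 : m * κ ≤ 2 * b - 2 := by linarith [K.2]
  have M2 : -(2 * b - 2) ≤ m * κ := by linarith [K.1]
  have G1 : G < 2 := by
    have l1 : p * G < p * 2 := by rw [← hdiv]; linarith
    exact lt_of_mul_lt_mul_left l1 (by omega)
  have G2 : -1 < G := by
    have l2 : p * (-1) < p * G := by rw [← hdiv]; linarith
    exact lt_of_mul_lt_mul_left l2 (by omega)
  have : G = 0 ∨ G = 1 := by omega
  rcases this with rfl | rfl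
  · have e : b = - (m * κ) := by linarith
    have e1 : m * m + b * b = m * m * (κ * κ + 1) := by rw [e]; ring
    have e2 : m * m * p ≤ m * m * (κ * κ + 1) := mul_le_mul_of_nonneg_left hkn (mul_self_nonneg _)
    have e3 : 2 * m * p ≤ m * m * p :=
      mul_le_mul_of_nonneg_right (mul_le_mul_of_nonneg_right hm2 (by omega)) (by omega)
    linarith
  · have h1 : p + 2 ≤ 3 * b := by linarith
    have h2 : (p + 2) * (p + 2) ≤ (3 * b) * (3 * b) := mul_self_le_mul_self (by omega) h1
    have h3 : m * p ≤ 4 * p := mul_le_mul_of_nonneg_right hm3 (by omega)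
    have h4 := mul_self_nonneg m
    have h5 : (p + 2) * (p + 2) ≤ 72 * p := by linarith
    nlinarith only [h5, hp128]

set_option maxHeartbeats 1000000 in
/-- The thin case. -/
theorem thin_case {c d u v p a b : ℤ} (hp : p = c * c + d * d) (ha : a = u * c + v * d)
    (hb : b = v * c - u * d) (hcop : IsCoprime c d) (hodd : p % 2 = 1) (hp128 : 128 ≤ p)
    (hn : u * u + v * v < p) (hb0 : 0 ≤ b) (hab : b ≤ a) (hb2 : 2 * b < p) :
    GoodDiff c d u v := by
  by_contra hbad
  obtain ⟨r, s, hrs⟩ := hcop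
  obtain ⟨h, hh⟩ : ∃ h, p = 2 * h + 1 := ⟨p / 2, by omega⟩
  have hnorm : a * a + b * b = p * (u * u + v * v) := by rw [hp, ha, hb]; ring
  have hap : a < p := by nlinarith
  -- a vector with first rotated coordinate one and second one reduced
  obtain ⟨x₁, y₁, κ, hx₁, hy₁, hk1, hk2⟩ :
      ∃ x y κ : ℤ, x * c + y * d = 1 ∧ y * c - x * d = κ ∧ -h ≤ κ ∧ κ ≤ h := by
    set t := (s * c - r * d + h) / p
    have h1 := Int.emod_add_mul_ediv (s * c - r * d + h) p
    have h2 := Int.emod_nonneg (s * c - r * d + h) (show p ≠ 0 by omega)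
    have h3 := Int.emod_lt_of_pos (s * c - r * d + h) (show 0 < p by omega)
    refine ⟨r + t * d, s - t * c, s * c - r * d - p * t, ?_, ?_, ?_, ?_⟩
    · linear_combination hrs
    · rw [hp]; ring
    · change _ + p * t = _ at h1; linarith
    · change _ + p * t = _ at h1; linarith
  have hkn : p ≤ κ * κ + 1 := by
    have e : κ * κ + 1 = p * (x₁ * x₁ + y₁ * y₁) := by
      have : (x₁ * c + y₁ * d) * (x₁ * c + y₁ * d) = 1 := by rw [hx₁]; ring
      rw [← hy₁, ← this, hp]; ring
    have : 0 < x₁ * x₁ + y₁ * y₁ := by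
      by_contra hc
      have : κ * κ + 1 ≤ 0 := by rw [e]; nlinarith
      nlinarith [mul_self_nonneg κ]
    rw [e]; nlinarith
  -- `p` divides `b - a κ`
  obtain ⟨g, hg⟩ : ∃ g, b - a * κ = p * g := by
    refine ⟨(v - a * y₁) * r - (u - a * x₁) * s
      + 0, ?_⟩
    have e0 : (u - a * x₁) * c + (v - a * y₁) * d = 0 := by
      linear_combination -ha - a * hx₁
    have e1 : b - a * κ = (v - a * y₁) * c - (u - a * x₁) * d := by rw [hb, ← hy₁]; ring
    rw [e1, hp]
    linear_combination (-((v - a * y₁) * c - (u - a * x₁) * d)) * hrs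
      + (s * c - r * d) * e0
  -- a point in every column
  have col : ∀ x : ℤ, -h ≤ x → a - h ≤ x → x ≤ h →
      ∃ y t : ℤ, y = x * κ - p * t ∧ -h ≤ y ∧ y ≤ b - h - 1 := by
    intro x hx0 hxa hxh
    set t := (x * κ + h) / p
    have h1 := Int.emod_add_mul_ediv (x * κ + h) p
    have h2 := Int.emod_nonneg (x * κ + h) (show p ≠ 0 by omega)
    have h3 := Int.emod_lt_of_pos (x * κ + h) (show 0 < p by omega)
    change _ + p * t = _ at h1
    refine ⟨x * κ - p * t, t, rfl, by linarith, ?_⟩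
    by_contra hc
    apply hbad
    apply GoodDiff.mk' (x * x₁ + t * d) (x * y₁ - t * c) p x (x * κ - p * t) a b hp ?_ ?_ ha hb
    · omega
    · omega
    · omega
    · omega
    · omega
    · omega
    · omega
    · omega
    · linear_combination - x * hx₁
    · rw [← hy₁, hp]; ring
  have ha0 : 0 ≤ a := hb0.trans hab
  obtain ⟨y₀, t₀, hy₀, hy₀1, hy₀2⟩ := col (a - h) (by omega) le_rfl (by omega)
  have prog : ∀ k : ℕ, (k : ℤ) + 1 ≤ p - a → ∃ t : ℤ, y₀ + k * κ = (a - h + k) * κ - p * t ∧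
      -h ≤ y₀ + k * κ ∧ y₀ + k * κ ≤ b - h - 1 := by
    intro k
    induction k with
    | zero => intro _; exact ⟨t₀, by push_cast; linarith, by push_cast; linarith, by push_cast; linarith⟩
    | succ k ih =>
      intro hk
      push_cast at hk ⊢
      obtain ⟨t, ht, hl, hu⟩ := ih (by linarith)
      obtain ⟨y', t', hy', hl', hu'⟩ := col (a - h + (k + 1)) (by omega) (by omega) (by omega)
      have e : y' - (y₀ + k * κ) - κ = p * (t - t') := by rw [hy', ht]; ring
      have : t - t' = 0 := by
        have l1 : p * (t - t') < p * 1 := by rw [← e]; linarith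
        have l2 : p * (-1) < p * (t - t') := by rw [← e]; linarith
        have := lt_of_mul_lt_mul_left l1 (by omega)
        have := lt_of_mul_lt_mul_left l2 (by omega)
        omega
      rw [this] at e
      have e' : y₀ + (k + 1) * κ = y' := by linarith
      rw [e']
      exact ⟨t', hy', hl', hu'⟩
  obtain ⟨m, hm⟩ : ∃ m, p - a = m := ⟨_, rfl⟩
  have hm1 : 1 ≤ m := by omega
  obtain ⟨_, -, hl, hu⟩ := prog (m - 1).toNat (by omega)
  have hcast : (((m - 1).toNat : ℕ) : ℤ) = m - 1 := by omega
  rw [hcast] at hl hu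
  have B1 : (m - 1) * κ ≤ b - 1 := by linarith
  have B2 : -(b - 1) ≤ (m - 1) * κ := by linarith
  have hsum : m * m + b * b < 2 * m * p := by
    have e : m * m + b * b = 2 * m * p - p * p + p * (u * u + v * v) := by
      rw [← hnorm, ← hm]; ring
    have := mul_lt_mul_of_pos_left hn (show 0 < p by omega)
    linarith
  have hdiv : b + m * κ = p * (g + κ) := by rw [← hm]; linear_combination hg
  obtain ⟨G, hG⟩ : ∃ G, g + κ = G := ⟨_, rfl⟩
  rw [hG] at hdiv
  rcases hm1.eq_or_lt with rfl | hm2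
  · -- one column
    have hG0 : G = 0 := by
      have l1 : p * G < p * 1 := by rw [← hdiv]; linarith
      have l2 : p * (-1) < p * G := by rw [← hdiv]; linarith
      have := lt_of_mul_lt_mul_left l1 (by omega)
      have := lt_of_mul_lt_mul_left l2 (by omega)
      omega
    have e1 : a * a + b * b = p * p - 2 * p + (1 + b * b) := by
      rw [show a = p - 1 by omega]; ring
    have e2 : 1 + b * b = p * (u * u + v * v - p + 2) := by linarith
    have e3 : u * u + v * v - p + 2 = 1 := by
      have : 0 < u * u + v * v - p + 2 := by
        by_contra hc; nlinarith
      have : u * u + v * v - p + 2 < 2 := by linarith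
      omega
    rw [e3] at e2
    have hbe : b % 2 = 0 := by
      rcases Int.emod_two_eq_zero_or_one b with h' | h'
      · exact h'
      · have : (1 + b * b) % 2 = 0 := by simp [Int.add_emod, Int.mul_emod, h']
        omega
    apply hbad
    apply even_case
    · rw [← hp]; exact hodd
    · rw [← hb]; exact hb0
    · rw [← hb, ← ha]; exact hab
    · rw [← hp, ← ha]; exact hap
    · rw [← ha]; omega
    · rw [← hb]; exact hbe
  · exact thin_arith hm2 hp128 hb2 B1 B2 hkn hsum hdiv

theorem wide_arith {C D N p a b : ℤ} (hp : p = C * C + D * D) (hp128 : 128 ≤ p)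
    (hnorm : a * a + b * b = p * N) (hn : N < p) (hab : b ≤ a)
    (h2 : p ≤ 2 * b) (h1 : p ≤ a + C + D) : False := by
  have hs : (C + D) * (C + D) ≤ 2 * p := by
    nlinarith [mul_self_nonneg (C - D)]
  have hN := mul_lt_mul_of_pos_left hn (show 0 < p by omega)
  have hap : a < p := by nlinarith
  obtain ⟨m, hm⟩ : ∃ m, m = p - a := ⟨_, rfl⟩
  have hm0 : 0 < m := by omega
  have hmm : m * m ≤ 2 * p := by nlinarith
  have hsum : b * b < 2 * m * p := by
    have e : b * b = 2 * m * p - p * p + p * N - m * m := by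
      rw [← hnorm, hm]; ring
    have := mul_self_nonneg m
    linarith
  have h8 : p < 8 * m := by
    have : p * p ≤ (2 * b) * (2 * b) := mul_self_le_mul_self (by omega) h2
    have : p * p < (8 * m) * p := by linarith
    exact lt_of_mul_lt_mul_right this (by omega)
  nlinarith

/-- Reduced case. -/
theorem reduced_case {c d u v : ℤ} (hcop : IsCoprime c d) (hodd : (c * c + d * d) % 2 = 1)
    (hn : u * u + v * v < c * c + d * d) (hb : 0 ≤ v * c - u * d)
    (hab : v * c - u * d ≤ u * c + v * d) : GoodDiff c d u v := by
  by_cases hp : c * c + d * d < 128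
  · exact small_case hodd hp hn hb hab
  by_cases h2 : 2 * (v * c - u * d) < c * c + d * d
  · exact thin_case rfl rfl rfl hcop hodd (by omega) hn hb hab h2
  by_cases h1 : u * c + v * d + |c| + |d| < c * c + d * d
  · exact round_case h1 (by linarith) hb (by linarith)
  · exfalso
    refine wide_arith (C := |c|) (D := |d|) (p := c * c + d * d) (N := u * u + v * v) ?_ (by omega)
      ?_ hn hab (by omega) (by omega)
    · rw [abs_mul_abs_self, abs_mul_abs_self]
    · ring

theorem coprime_case {c d u v : ℤ} (hcop : IsCoprime c d) (hodd : (c * c + d * d) % 2 = 1)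
    (hn : u * u + v * v < c * c + d * d) : GoodDiff c d u v := by
  -- first coordinate dominating
  have step1 : ∀ u v : ℤ, u * u + v * v < c * c + d * d →
      |v * c - u * d| ≤ u * c + v * d → GoodDiff c d u v := by
    intro u v hn h
    rw [abs_le] at h
    by_cases h0 : 0 ≤ v * c - u * d
    · exact reduced_case hcop hodd hn h0 h.2
    · apply GoodDiff.of_conj
      apply reduced_case hcop.neg_right
      · rwa [neg_mul_neg]
      · rwa [neg_mul_neg, neg_mul_neg]
      · linarith
      · linarith
  have step2 : ∀ u v : ℤ, u * u + v * v < c * c + d * d →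
      |v * c - u * d| ≤ |u * c + v * d| → GoodDiff c d u v := by
    intro u v hn h
    by_cases h0 : 0 ≤ u * c + v * d
    · rw [abs_of_nonneg h0] at h
      exact step1 u v hn h
    · rw [abs_of_neg (a := u * c + v * d) (by omega), abs_le] at h
      apply GoodDiff.of_rot
      apply GoodDiff.of_rot
      apply step1
      · linarith
      · rw [abs_le]; constructor <;> linarith
  by_cases h : |v * c - u * d| ≤ |u * c + v * d|
  · exact step2 u v hn h
  · apply GoodDiff.of_rot
    apply step2
    · linarith
    · rw [show -v * c + u * d = -(v * c - u * d) by ring, abs_neg,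
        show u * c - -v * d = u * c + v * d by ring]
      omega

theorem half_bound {c u : ℤ} (hc : c % 2 = 1) (hu : u * u < c * c) :
    2 * |(u / 2) * c| < c * c ∧ 2 * |(u / 2 - u) * c| < c * c := by
  have hlt : |u| < |c| := sq_lt_sq.1 (by rw [sq, sq]; exact hu)
  have hc0 : 0 < |c| := lt_of_le_of_lt (abs_nonneg u) hlt
  have hodd : |c| % 2 = 1 := by rcases abs_choice c with h | h <;> rw [h] <;> omega
  have e := abs_mul_abs_self c
  rw [abs_lt] at hlt
  have b1 : 2 * |u / 2| < |c| := by
    have : |u / 2| ≤ (|c| - 1) / 2 := abs_le.2 ⟨by omega, by omega⟩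
    omega
  have b2 : 2 * |u / 2 - u| < |c| := by
    have : |u / 2 - u| ≤ (|c| - 1) / 2 := abs_le.2 ⟨by omega, by omega⟩
    omega
  rw [abs_mul, abs_mul]
  constructor <;> nlinarith

theorem real_case {c u v : ℤ} (hodd : (c * c) % 2 = 1)
    (hn : u * u + v * v < c * c) : GoodDiff c 0 u v := by
  have hc : c % 2 = 1 := by
    rcases Int.emod_two_eq_zero_or_one c with h | h
    · simp [Int.mul_emod, h] at hodd
    · exact h
  obtain ⟨h1, h2⟩ := half_bound (u := u) hc (by nlinarith [mul_self_nonneg v])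
  obtain ⟨h3, h4⟩ := half_bound (u := v) hc (by nlinarith [mul_self_nonneg u])
  refine ⟨u / 2, v / 2, ?_, ?_, ?_, ?_⟩ <;>
    simp only [mul_zero, add_zero, zero_add, sub_zero, zero_sub, abs_neg] <;> assumption

theorem imag_case {d u v : ℤ} (hodd : (d * d) % 2 = 1)
    (hn : u * u + v * v < d * d) : GoodDiff 0 d u v := by
  have hd : d % 2 = 1 := by
    rcases Int.emod_two_eq_zero_or_one d with h | h
    · simp [Int.mul_emod, h] at hodd
    · exact h
  obtain ⟨h1, h2⟩ := half_bound (u := u) hd (by nlinarith [mul_self_nonneg v])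
  obtain ⟨h3, h4⟩ := half_bound (u := v) hd (by nlinarith [mul_self_nonneg u])
  refine ⟨u / 2, v / 2, ?_, ?_, ?_, ?_⟩ <;>
    simp only [mul_zero, add_zero, zero_add, sub_zero, zero_sub, abs_neg] <;> assumption

theorem norm_eq_coord (q : GaussianInt) : q.norm = q.re * q.re + q.im * q.im := by
  rw [Zsqrtd.norm_def]; ring

theorem GoodDiff.isValidDiff {q δ : GaussianInt} (h : GoodDiff q.re q.im δ.re δ.im) :
    IsValidDiff q δ := by
  obtain ⟨x, y, h1, h2, h3, h4⟩ := h
  refine ⟨⟨x, y⟩, ⟨x, y⟩ - δ, ⟨?_, ?_⟩, ⟨?_, ?_⟩, by ring⟩ <;> rw [norm_eq_coord]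
  · convert h1 using 3; simp
  · convert h2 using 3; simp; ring
  · convert h3 using 3; simp; ring
  · convert h4 using 3; simp; ring

theorem prime_odd {q : GaussianInt} (hq : Prime q) (hq5 : 5 ≤ q.norm) :
    (q.re * q.re + q.im * q.im) % 2 = 1 := by
  by_contra hc
  have hpar : (q.re + q.im) % 2 = 0 := by
    rcases Int.emod_two_eq_zero_or_one q.re with h | h <;>
    rcases Int.emod_two_eq_zero_or_one q.im with h' | h' <;>
    simp [Int.add_emod, Int.mul_emod, h, h'] at hc ⊢
  obtain ⟨s, hs⟩ : ∃ s, q.re + q.im = 2 * s := ⟨(q.re + q.im) / 2, by omega⟩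
  have e : q = (⟨1, 1⟩ : GaussianInt) * ⟨s, q.im - s⟩ := by
    ext <;> simp <;> omega
  have hN : q.norm = 2 * (⟨s, q.im - s⟩ : GaussianInt).norm := by
    conv_lhs => rw [e, Zsqrtd.norm_mul]
    rfl
  rcases hq.irreducible.isUnit_or_isUnit e with h | h
  · have := (Zsqrtd.norm_eq_one_iff' (by norm_num) _).2 h
    simp [Zsqrtd.norm_def] at this
  · have := (Zsqrtd.norm_eq_one_iff' (by norm_num) _).2 h
    omega

theorem prime_shape {q : GaussianInt} (hq : Prime q) :
    IsCoprime q.re q.im ∨ q.re = 0 ∨ q.im = 0 := by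
  by_cases hg : Int.gcd q.re q.im = 1
  · left; exact Int.isCoprime_iff_gcd_eq_one.2 hg
  right
  obtain ⟨x, hx⟩ := Int.gcd_dvd_left q.re q.im
  obtain ⟨y, hy⟩ := Int.gcd_dvd_right q.re q.im
  set g : ℤ := (Int.gcd q.re q.im : ℤ) with hgdef
  have e : q = (⟨g, 0⟩ : GaussianInt) * ⟨x, y⟩ := by
    ext
    · simp; exact hx
    · simp; exact hy
  rcases hq.irreducible.isUnit_or_isUnit e with h | h
  · have := (Zsqrtd.norm_eq_one_iff' (by norm_num) _).2 h
    simp [Zsqrtd.norm_def] at this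
    exfalso
    apply hg
    have h0 : 0 ≤ g := by rw [hgdef]; positivity
    have : g = 1 := by nlinarith
    omega
  · have := (Zsqrtd.norm_eq_one_iff' (by norm_num) _).2 h
    rw [norm_eq_coord] at this
    simp only at this
    have : x = 0 ∨ y = 0 := by
      by_contra hc
      push Not at hc
      have h1 : 0 < x * x := mul_self_pos.2 hc.1
      have h2 : 0 < y * y := mul_self_pos.2 hc.2
      omega
    rcases this with h | h
    · left; rw [hx, h, mul_zero]
    · right; rw [hy, h, mul_zero]

theorem valid_of_norm_lt {q : GaussianInt} (hq : Prime q) (hq5 : 5 ≤ q.norm) (δ : GaussianInt)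
    (hδ : δ.norm < q.norm) : IsValidDiff q δ := by
  have hodd := prime_odd hq hq5
  rw [norm_eq_coord, norm_eq_coord] at hδ
  apply GoodDiff.isValidDiff
  rcases prime_shape hq with h | h | h
  · exact coprime_case h hodd hδ
  · rw [h] at hodd hδ ⊢
    exact imag_case (by simpa using hodd) (by simpa using hδ)
  · rw [h] at hodd hδ ⊢
    exact real_case (by simpa using hodd) (by simpa using hδ)

/-- Let `q` be a Gaussian prime with `N(q) ≥ 5`. Every Gaussian integer `δ` with
`N(δ) < N(q)` is a valid difference; in particular every pair `(δA, δB) ≠ (0, 0)` with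
`N(δA) < N(q)` and `N(δB) < N(q)` is a distance-valid difference pair. -/
theorem stmt4 (q : GaussianInt) (hq : Prime q) (hq5 : 5 ≤ q.norm) :
    (∀ δ : GaussianInt, δ.norm < q.norm → IsValidDiff q δ) ∧
    (∀ δA δB : GaussianInt, δA.norm < q.norm → δB.norm < q.norm → (δA, δB) ≠ (0, 0) →
      IsDistanceValidPair q δA δB) := by
  exact ⟨fun δ h => valid_of_norm_lt hq hq5 δ h, fun δA δB hA hB h0 =>
    ⟨valid_of_norm_lt hq hq5 δA hA, valid_of_norm_lt hq hq5 δB hB, h0⟩⟩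
end

section
/- Let q be a Gaussian prime with N(q) ≥ 5, and let (δ_A, δ_B) be a distance-valid difference pair such that δ_A is a unit of ℤ[i] or δ_B is a unit of ℤ[i]. Then there exists a distance-valid difference pair (δ′_A, δ′_B) with δ′_A·δ_B − δ′_B·δ_A = 1. -/
open GaussianInt

theorem unit_validDiff (q v : GaussianInt) (hq5 : 5 ≤ q.norm) (hv : IsUnit v) :
    IsValidDiff q v := by
  have hn : (v * star q).norm = q.norm := by
    have h1 : v.norm = 1 := (Zsqrtd.norm_eq_one_iff' (by norm_num) v).2 hv
    rw [Zsqrtd.norm_mul, h1, one_mul, Zsqrtd.norm_conj]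
  refine ⟨v, 0, ?_, ?_, by simp⟩
  · unfold IsValidSymbol
    rw [← hn] at hq5 ⊢
    generalize v * star q = w at *
    rw [Zsqrtd.norm_def] at *
    constructor
    · rcases abs_cases w.re with ⟨h, _⟩ | ⟨h, _⟩ <;> rw [h] <;>
        nlinarith [sq_nonneg (w.re - 2), sq_nonneg (w.re + 2), sq_nonneg w.im]
    · rcases abs_cases w.im with ⟨h, _⟩ | ⟨h, _⟩ <;> rw [h] <;>
        nlinarith [sq_nonneg (w.im - 2), sq_nonneg (w.im + 2), sq_nonneg w.re]
  · unfold IsValidSymbol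
    simp
    omega

theorem zero_validDiff (q : GaussianInt) (hq5 : 5 ≤ q.norm) : IsValidDiff q 0 := by
  refine ⟨0, 0, ?_, ?_, by simp⟩ <;>
  · unfold IsValidSymbol
    simp
    omega

/-- Let `q` be a Gaussian prime with `N(q) ≥ 5` and let `(δA, δB)` be a
distance-valid difference pair with `δA` or `δB` a unit of `ℤ[i]`. Then there exists a
distance-valid difference pair `(δA', δB')` with `δA'·δB − δB'·δA = 1`. -/
theorem stmt5 (q : GaussianInt) (hq : Prime q) (hq5 : 5 ≤ q.norm)
    (δA δB : GaussianInt) (h : IsDistanceValidPair q δA δB)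
    (hu : IsUnit δA ∨ IsUnit δB) :
    ∃ δA' δB' : GaussianInt, IsDistanceValidPair q δA' δB' ∧
      δA' * δB - δB' * δA = 1 := by
  rcases hu with hu | hu
  · obtain ⟨v, hv⟩ := hu.exists_right_inv
    have hvu : IsUnit (-v) := (IsUnit.of_mul_eq_one_right _ hv).neg
    refine ⟨0, -v, ⟨zero_validDiff q hq5, unit_validDiff q _ hq5 hvu, ?_⟩, ?_⟩
    · intro h0
      exact hvu.ne_zero (Prod.ext_iff.1 h0).2
    · linear_combination hv
  · obtain ⟨v, hv⟩ := hu.exists_right_inv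
    have hvu : IsUnit v := IsUnit.of_mul_eq_one_right _ hv
    refine ⟨v, 0, ⟨unit_validDiff q _ hq5 hvu, zero_validDiff q hq5, ?_⟩, ?_⟩
    · intro h0
      exact hvu.ne_zero (Prod.ext_iff.1 h0).1
    · linear_combination hv
end

section
/- Let q be a Gaussian prime with N(q) ≥ 5, and let (δ_A, δ_B) be a distance-valid difference pair with δ_A ≠ 0, δ_B ≠ 0 and gcd(δ_A, δ_B) a unit of ℤ[i] (a nontrivial characteristic difference). Then there exists a distance-valid difference pair (δ′_A, δ′_B) with gcd(δ′_A, δ′_B) a unit such that N(δ′_A·δ_B − δ′_B·δ_A) = 1. -/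
open GaussianInt

lemma symbol_iff (q w : GaussianInt) : IsValidSymbol q w ↔
    (2 * (w.re * q.re + w.im * q.im) < q.norm ∧ -(2 * (w.re * q.re + w.im * q.im)) < q.norm) ∧
    (2 * (w.im * q.re - w.re * q.im) < q.norm ∧ -(2 * (w.im * q.re - w.re * q.im)) < q.norm) := by
  unfold IsValidSymbol
  have h1 : (w * star q).re = w.re * q.re + w.im * q.im := by simp
  have h2 : (w * star q).im = w.im * q.re - w.re * q.im := by simp; ring
  rw [h1, h2]
  have key : ∀ x n : ℤ, 2 * |x| < n ↔ (2 * x < n ∧ -(2 * x) < n) := by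
    intro x n
    rcases abs_cases x with ⟨h, _⟩ | ⟨h, _⟩ <;> rw [h] <;> constructor <;> intro h <;> omega
  rw [key, key]

lemma symbol_neg {q w : GaussianInt} (h : IsValidSymbol q w) : IsValidSymbol q (-w) := by
  rw [symbol_iff] at *
  simp only [Zsqrtd.re_neg, Zsqrtd.im_neg]
  obtain ⟨⟨h1, h2⟩, h3, h4⟩ := h
  refine ⟨⟨?_, ?_⟩, ?_, ?_⟩ <;> linarith

lemma symbol_I {q w : GaussianInt} (h : IsValidSymbol q w) :
    IsValidSymbol q ⟨-w.im, w.re⟩ := by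
  rw [symbol_iff] at *
  obtain ⟨⟨h1, h2⟩, h3, h4⟩ := h
  refine ⟨⟨?_, ?_⟩, ?_, ?_⟩ <;> simp only <;> linarith

lemma lin_comb_lt {D a b c x y z p n : ℤ} (hD : 0 < D) (ha : 0 ≤ a) (hb : 0 ≤ b) (hc : 0 ≤ c)
    (hs : a + b + c = D) (hx : x < n) (hy : y < n) (hz : z < n)
    (h : D * p = a * x + b * y + c * z) : p < n := by
  by_contra hn
  push Not at hn
  have h0 : D * n ≤ D * p := mul_le_mul_of_nonneg_left hn hD.le
  have h1 : a * x ≤ a * (n - 1) := mul_le_mul_of_nonneg_left (by omega) ha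
  have h2 : b * y ≤ b * (n - 1) := mul_le_mul_of_nonneg_left (by omega) hb
  have h3 : c * z ≤ c * (n - 1) := mul_le_mul_of_nonneg_left (by omega) hc
  subst hs
  linarith

/-- Lattice points in a triangle of symbols are symbols. -/
lemma symbol_conv {q v0 v1 v2 p : GaussianInt} (h0 : IsValidSymbol q v0)
    (h1 : IsValidSymbol q v1) (h2 : IsValidSymbol q v2) {D a b c : ℤ} (hD : 0 < D)
    (ha : 0 ≤ a) (hb : 0 ≤ b) (hc : 0 ≤ c) (hs : a + b + c = D)
    (hre : D * p.re = a * v0.re + b * v1.re + c * v2.re)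
    (him : D * p.im = a * v0.im + b * v1.im + c * v2.im) : IsValidSymbol q p := by
  rw [symbol_iff] at *
  obtain ⟨⟨h01, h02⟩, h03, h04⟩ := h0
  obtain ⟨⟨h11, h12⟩, h13, h14⟩ := h1
  obtain ⟨⟨h21, h22⟩, h23, h24⟩ := h2
  refine ⟨⟨?_, ?_⟩, ?_, ?_⟩
  · exact lin_comb_lt hD ha hb hc hs h01 h11 h21
      (by linear_combination (2 * q.re) * hre + (2 * q.im) * him)
  · exact lin_comb_lt hD ha hb hc hs h02 h12 h22
      (by linear_combination (-2 * q.re) * hre - (2 * q.im) * him)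
  · exact lin_comb_lt hD ha hb hc hs h03 h13 h23
      (by linear_combination (2 * q.re) * him - (2 * q.im) * hre)
  · exact lin_comb_lt hD ha hb hc hs h04 h14 h24
      (by linear_combination (-2 * q.re) * him + (2 * q.im) * hre)

lemma diff_of_sum {q s t d : GaussianInt} (hs : IsValidSymbol q s) (ht : IsValidSymbol q t)
    (h : d = s + t) : IsValidDiff q d := ⟨s, -t, hs, symbol_neg ht, by rw [h]; ring⟩

/-- Case where one weight is at least `D`. -/
lemma diff_big {q v0 v1 v2 d : GaussianInt} (h0 : IsValidSymbol q v0)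
    (h1 : IsValidSymbol q v1) (h2 : IsValidSymbol q v2) {D a b c : ℤ} (hD : 0 < D)
    (ha : D ≤ a) (hb : 0 ≤ b) (hc : 0 ≤ c) (hs : a + b + c = 2 * D)
    (hre : D * d.re = a * v0.re + b * v1.re + c * v2.re)
    (him : D * d.im = a * v0.im + b * v1.im + c * v2.im) : IsValidDiff q d := by
  refine diff_of_sum h0 (t := d - v0) ?_ (by ring)
  refine symbol_conv h0 h1 h2 hD (a := a - D) (b := b) (c := c) (by omega) hb hc (by omega) ?_ ?_
  · rw [Zsqrtd.re_sub]; linear_combination hre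
  · rw [Zsqrtd.im_sub]; linear_combination him

lemma diff_tri (q : GaussianInt) (n : ℕ) : ∀ (v0 v1 v2 d : GaussianInt), IsValidSymbol q v0 →
    IsValidSymbol q v1 → IsValidSymbol q v2 → ∀ (D a b c : ℤ), D.toNat = n → 0 < D →
    0 ≤ a → 0 ≤ b → 0 ≤ c → a + b + c = 2 * D →
    D * d.re = a * v0.re + b * v1.re + c * v2.re →
    D * d.im = a * v0.im + b * v1.im + c * v2.im → IsValidDiff q d := by
  induction n using Nat.strong_induction_on with
  | _ n ih =>
  intro v0 v1 v2 d h0 h1 h2 D a b c hn hD ha hb hc hs hre him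
  by_cases ha' : D ≤ a
  · exact diff_big h0 h1 h2 hD ha' hb hc hs hre him
  by_cases hb' : D ≤ b
  · exact diff_big h1 h0 h2 hD hb' ha hc (by linarith) (by linarith) (by linarith)
  by_cases hc' : D ≤ c
  · exact diff_big h2 h1 h0 hD hc' hb ha (by linarith) (by linarith) (by linarith)
  push Not at ha' hb' hc'
  have hp : IsValidSymbol q (v0 + v1 + v2 - d) := by
    refine symbol_conv h0 h1 h2 hD (a := D - a) (b := D - b) (c := D - c) (by omega) (by omega)
      (by omega) (by omega) ?_ ?_
    · simp only [Zsqrtd.re_sub, Zsqrtd.re_add]; linear_combination -hre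
    · simp only [Zsqrtd.im_sub, Zsqrtd.im_add]; linear_combination -him
  have canc : ∀ x y : ℤ, D * x = D * y → x = y := fun x y h => mul_left_cancel₀ hD.ne' h
  rcases le_total a b with hab | hab
  · rcases le_total a c with hac | hac
    · refine ih (D - a).toNat (by omega) _ v1 v2 d hp h1 h2 (D - a) a (b - a) (c - a) rfl
        (by omega) (by omega) (by omega) (by omega) (by omega) (canc _ _ ?_) (canc _ _ ?_)
      · simp only [Zsqrtd.re_sub, Zsqrtd.re_add]; linear_combination D * hre
      · simp only [Zsqrtd.im_sub, Zsqrtd.im_add]; linear_combination D * him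
    · refine ih (D - c).toNat (by omega) _ v0 v1 d hp h0 h1 (D - c) c (a - c) (b - c) rfl
        (by omega) (by omega) (by omega) (by omega) (by omega) (canc _ _ ?_) (canc _ _ ?_)
      · simp only [Zsqrtd.re_sub, Zsqrtd.re_add]; linear_combination D * hre
      · simp only [Zsqrtd.im_sub, Zsqrtd.im_add]; linear_combination D * him
  · rcases le_total b c with hac | hac
    · refine ih (D - b).toNat (by omega) _ v0 v2 d hp h0 h2 (D - b) b (a - b) (c - b) rfl
        (by omega) (by omega) (by omega) (by omega) (by omega) (canc _ _ ?_) (canc _ _ ?_)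
      · simp only [Zsqrtd.re_sub, Zsqrtd.re_add]; linear_combination D * hre
      · simp only [Zsqrtd.im_sub, Zsqrtd.im_add]; linear_combination D * him
    · refine ih (D - c).toNat (by omega) _ v0 v1 d hp h0 h1 (D - c) c (a - c) (b - c) rfl
        (by omega) (by omega) (by omega) (by omega) (by omega) (canc _ _ ?_) (canc _ _ ?_)
      · simp only [Zsqrtd.re_sub, Zsqrtd.re_add]; linear_combination D * hre
      · simp only [Zsqrtd.im_sub, Zsqrtd.im_add]; linear_combination D * him

/-- Embedding of the Gaussian integers in the rational plane. -/
def emb (w : GaussianInt) : ℚ × ℚ := ((w.re : ℚ), (w.im : ℚ))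

lemma clear_den (x y z : ℚ) (hx : 0 ≤ x) (hy : 0 ≤ y) (hz : 0 ≤ z) :
    ∃ D a b c : ℤ, 0 < D ∧ 0 ≤ a ∧ 0 ≤ b ∧ 0 ≤ c ∧ (a : ℚ) = D * x ∧ (b : ℚ) = D * y ∧
      (c : ℚ) = D * z := by
  have hxd : (x.den : ℚ) ≠ 0 := by exact_mod_cast x.den_nz
  have hyd : (y.den : ℚ) ≠ 0 := by exact_mod_cast y.den_nz
  have hzd : (z.den : ℚ) ≠ 0 := by exact_mod_cast z.den_nz
  refine ⟨x.den * y.den * z.den, x.num * y.den * z.den, x.den * y.num * z.den,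
    x.den * y.den * z.num, ?_, ?_, ?_, ?_, ?_, ?_, ?_⟩
  · have := x.den_pos; have := y.den_pos; have := z.den_pos; positivity
  · have := Rat.num_nonneg.2 hx; positivity
  · have := Rat.num_nonneg.2 hy; positivity
  · have := Rat.num_nonneg.2 hz; positivity
  · push_cast; linear_combination -(y.den * z.den : ℚ) * (Rat.mul_den_eq_num x)
  · push_cast; linear_combination -(x.den * z.den : ℚ) * (Rat.mul_den_eq_num y)
  · push_cast; linear_combination -(x.den * y.den : ℚ) * (Rat.mul_den_eq_num z)

lemma diff_rat {q v0 v1 v2 d : GaussianInt} (h0 : IsValidSymbol q v0)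
    (h1 : IsValidSymbol q v1) (h2 : IsValidSymbol q v2) (x y z : ℚ) (hx : 0 ≤ x) (hy : 0 ≤ y)
    (hz : 0 ≤ z) (hs : x + y + z = 1)
    (h : x • emb v0 + y • emb v1 + z • emb v2 = (1 / 2 : ℚ) • emb d) : IsValidDiff q d := by
  obtain ⟨D, a, b, c, hD, ha, hb, hc, ea, eb, ec⟩ := clear_den x y z hx hy hz
  have hre := congrArg Prod.fst h
  have him := congrArg Prod.snd h
  simp only [emb, Prod.fst_add, Prod.snd_add, Prod.smul_mk, smul_eq_mul] at hre him
  refine diff_tri q _ v0 v1 v2 d h0 h1 h2 D (2 * a) (2 * b) (2 * c) rfl hD (by omega) (by omega)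
    (by omega) ?_ ?_ ?_
  · have : (2 * a + 2 * b + 2 * c : ℚ) = 2 * D := by
      rw [ea, eb, ec]; linear_combination 2 * (D : ℚ) * hs
    exact_mod_cast this
  · have : (D * d.re : ℚ) = 2 * a * v0.re + 2 * b * v1.re + 2 * c * v2.re := by
      rw [ea, eb, ec]; linear_combination -2 * (D : ℚ) * hre
    exact_mod_cast this
  · have : (D * d.im : ℚ) = 2 * a * v0.im + 2 * b * v1.im + 2 * c * v2.im := by
      rw [ea, eb, ec]; linear_combination -2 * (D : ℚ) * him
    exact_mod_cast this

lemma diff_iff_hull (q d : GaussianInt) :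
    IsValidDiff q d ↔ (1 / 2 : ℚ) • emb d ∈ convexHull ℚ (emb '' {w | IsValidSymbol q w}) := by
  constructor
  · rintro ⟨w, w', hw, hw', rfl⟩
    have h1 : emb w ∈ convexHull ℚ (emb '' {w | IsValidSymbol q w}) :=
      subset_convexHull _ _ ⟨w, hw, rfl⟩
    have h2 : emb (-w') ∈ convexHull ℚ (emb '' {w | IsValidSymbol q w}) :=
      subset_convexHull _ _ ⟨-w', symbol_neg hw', rfl⟩
    have h3 := (convex_convexHull ℚ (emb '' {w | IsValidSymbol q w})) h1 h2
      (a := 1 / 2) (b := 1 / 2) (by norm_num) (by norm_num) (by norm_num)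
    convert h3 using 1
    simp [emb]
    constructor <;> ring
  · intro h
    obtain ⟨ι, _, z, w, hz, hi, hw, hs, he⟩ := eq_pos_convex_span_of_mem_convexHull h
    have hcard := hi.card_le_finrank_succ
    have hfr : Module.finrank ℚ (vectorSpan ℚ (Set.range z)) ≤ 2 := by
      refine (Submodule.finrank_le _).trans ?_
      simp
    have hc3 : Fintype.card ι ≤ 3 := by omega
    have hz' : ∀ i, ∃ v, IsValidSymbol q v ∧ emb v = z i := fun i => hz ⟨i, rfl⟩
    choose v hv hvz using hz'
    obtain ⟨n, hn⟩ : ∃ n, n = Fintype.card ι := ⟨_, rfl⟩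
    let e : Fin n ≃ ι := (Fintype.equivFinOfCardEq hn.symm).symm
    rw [← e.sum_comp] at hs he
    rw [← hn] at hc3
    simp only [← hvz] at he
    clear_value e
    interval_cases n
    · simp at hs
    · simp only [Fin.sum_univ_one] at hs he
      exact diff_rat (hv (e 0)) (hv (e 0)) (hv (e 0)) (w (e 0)) 0 0 (hw _).le le_rfl le_rfl
        (by simpa using hs) (by simpa using he)
    · simp only [Fin.sum_univ_two] at hs he
      exact diff_rat (hv (e 0)) (hv (e 1)) (hv (e 0)) (w (e 0)) (w (e 1)) 0 (hw _).le (hw _).le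
        le_rfl (by simpa using hs) (by simpa using he)
    · simp only [Fin.sum_univ_three] at hs he
      exact diff_rat (hv (e 0)) (hv (e 1)) (hv (e 2)) _ _ _ (hw _).le (hw _).le
        (hw _).le hs he

lemma diff_neg {q d : GaussianInt} (h : IsValidDiff q d) : IsValidDiff q (-d) := by
  obtain ⟨w, w', hw, hw', rfl⟩ := h
  exact ⟨w', w, hw', hw, by ring⟩

lemma diff_I {q d : GaussianInt} (h : IsValidDiff q d) : IsValidDiff q ⟨-d.im, d.re⟩ := by
  obtain ⟨w, w', hw, hw', rfl⟩ := h
  refine ⟨_, _, symbol_I hw, symbol_I hw', ?_⟩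
  ext <;> simp; ring

/-- If `c = z a` with `|Re z| + |Im z| ≤ 1` and `a` is a valid difference, so is `c`. -/
lemma diff_of_l1 {q a c : GaussianInt} (ha : IsValidDiff q a) (ha0 : 0 < a.norm)
    (h : |(c * star a).re| + |(c * star a).im| ≤ a.norm) : IsValidDiff q c := by
  have hP : (c * star a).re = c.re * a.re + c.im * a.im := by simp
  have hQ : (c * star a).im = c.im * a.re - c.re * a.im := by simp; ring
  have hn : a.norm = a.re * a.re + a.im * a.im := by rw [Zsqrtd.norm_def]; ring
  set P := (c * star a).re
  set Q := (c * star a).im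
  have hA : ∃ s : ℤ, ∃ u, IsValidDiff q u ∧ u.re = s * a.re ∧ u.im = s * a.im ∧ |P| * s = P := by
    rcases abs_cases P with ⟨h, _⟩ | ⟨h, _⟩
    · exact ⟨1, a, ha, by ring, by ring, by rw [h]; ring⟩
    · exact ⟨-1, -a, diff_neg ha, by simp, by simp, by rw [h]; ring⟩
  have hB : ∃ s : ℤ, ∃ u, IsValidDiff q u ∧ u.re = s * (-a.im) ∧ u.im = s * a.re ∧
      |Q| * s = Q := by
    rcases abs_cases Q with ⟨h, _⟩ | ⟨h, _⟩
    · exact ⟨1, _, diff_I ha, by ring, by ring, by rw [h]; ring⟩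
    · exact ⟨-1, _, diff_neg (diff_I ha), by simp, by simp, by rw [h]; ring⟩
  obtain ⟨s, u, hu, hur, hui, hsP⟩ := hA
  obtain ⟨t, v, hv, hvr, hvi, htQ⟩ := hB
  have hn0 : (0 : ℚ) < a.norm := by exact_mod_cast ha0
  rw [diff_iff_hull] at hu hv ⊢
  have hz : (0 : ℚ × ℚ) ∈ convexHull ℚ (emb '' {w | IsValidSymbol q w}) := by
    refine subset_convexHull _ _ ⟨0, ?_, by simp [emb]⟩
    obtain ⟨w, w', hw, -, -⟩ := ha
    have := hw.1
    have h3 := abs_nonneg (w * star q).re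
    refine ⟨?_, ?_⟩ <;> simp <;> omega
  have hcv := convex_convexHull ℚ (emb '' {w | IsValidSymbol q w})
  have hq1 : ((|P| : ℤ) : ℚ) + ((|Q| : ℤ) : ℚ) ≤ a.norm := by exact_mod_cast h
  have hP0 : (0 : ℚ) ≤ ((|P| : ℤ) : ℚ) := by exact_mod_cast abs_nonneg P
  have hQ0 : (0 : ℚ) ≤ ((|Q| : ℤ) : ℚ) := by exact_mod_cast abs_nonneg Q
  have key := hcv.sum_mem (t := Finset.univ)
    (w := ![((|P| : ℤ) : ℚ) / a.norm, ((|Q| : ℤ) : ℚ) / a.norm,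
      (a.norm - ((|P| : ℤ) : ℚ) - ((|Q| : ℤ) : ℚ)) / a.norm])
    (z := ![(1 / 2 : ℚ) • emb u, (1 / 2 : ℚ) • emb v, 0]) ?_ ?_ ?_
  · convert key using 1
    have e1 : ((|P| : ℤ) : ℚ) * s = P := by exact_mod_cast hsP
    have e2 : ((|Q| : ℤ) : ℚ) * t = Q := by exact_mod_cast htQ
    have hPq : (P : ℚ) = c.re * a.re + c.im * a.im := by exact_mod_cast hP
    have hQq : (Q : ℚ) = c.im * a.re - c.re * a.im := by exact_mod_cast hQ
    have hnq : (a.norm : ℚ) = a.re * a.re + a.im * a.im := by exact_mod_cast hn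
    simp only [Fin.sum_univ_three, Matrix.cons_val_zero, Matrix.cons_val_one, Matrix.cons_val,
      smul_zero, add_zero, emb, hur, hui, hvr, hvi, Prod.smul_mk, smul_eq_mul, Prod.mk_add_mk,
      Prod.mk.injEq, Int.cast_mul, Int.cast_neg]
    constructor
    · have : ((|P| : ℤ) : ℚ) / a.norm * (1 / 2 * (s * a.re)) +
          ((|Q| : ℤ) : ℚ) / a.norm * (1 / 2 * (t * -a.im)) =
          (1 / 2) * ((((|P| : ℤ) : ℚ) * s) * a.re - (((|Q| : ℤ) : ℚ) * t) * a.im) / a.norm := by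
        ring
      rw [this, e1, e2, eq_div_iff hn0.ne', hPq, hQq, hnq]
      ring
    · have : ((|P| : ℤ) : ℚ) / a.norm * (1 / 2 * (s * a.im)) +
          ((|Q| : ℤ) : ℚ) / a.norm * (1 / 2 * (t * a.re)) =
          (1 / 2) * ((((|P| : ℤ) : ℚ) * s) * a.im + (((|Q| : ℤ) : ℚ) * t) * a.re) / a.norm := by
        ring
      rw [this, e1, e2, eq_div_iff hn0.ne', hPq, hQq, hnq]
      ring
  · intro i _
    have h3 : (0 : ℚ) ≤ (a.norm - ((|P| : ℤ) : ℚ) - ((|Q| : ℤ) : ℚ)) / a.norm :=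
      div_nonneg (by linarith) hn0.le
    have h4 := div_nonneg hP0 hn0.le
    have h5 := div_nonneg hQ0 hn0.le
    fin_cases i
    · exact h4
    · exact h5
    · exact h3
  · simp only [Fin.sum_univ_three, Matrix.cons_val_zero, Matrix.cons_val_one, Matrix.cons_val]
    field_simp
    ring
  · intro i _
    fin_cases i
    · exact hu
    · exact hv
    · exact hz

lemma symbol_small {q : GaussianInt} (hq5 : 5 ≤ q.norm) (x y : ℤ) (h : x ^ 2 + y ^ 2 ≤ 1) :
    IsValidSymbol q ⟨x, y⟩ := by
  have hn : q.norm = q.re * q.re + q.im * q.im := by rw [Zsqrtd.norm_def]; ring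
  have key : ∀ r s : ℤ, r ^ 2 + s ^ 2 ≤ q.norm → 2 * r < q.norm ∧ -(2 * r) < q.norm := by
    intro r s hrs
    constructor <;> nlinarith [sq_nonneg s, sq_nonneg r]
  have hb : (x * q.re + y * q.im) ^ 2 + (y * q.re - x * q.im) ^ 2 ≤ q.norm := by
    have : (x * q.re + y * q.im) ^ 2 + (y * q.re - x * q.im) ^ 2
        = (x ^ 2 + y ^ 2) * q.norm := by rw [hn]; ring
    rw [this]; nlinarith
  rw [symbol_iff]
  exact ⟨key _ _ hb, key _ (x * q.re + y * q.im) (by linarith)⟩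

lemma diff_small {q : GaussianInt} (hq5 : 5 ≤ q.norm) (d : GaussianInt) (h : d.norm ≤ 4) :
    IsValidDiff q d := by
  have hn : d.norm = d.re * d.re + d.im * d.im := by rw [Zsqrtd.norm_def]; ring
  obtain ⟨x, y⟩ := d
  simp only at hn
  rw [hn] at h
  have hx1 : x ≤ 2 := by nlinarith
  have hx2 : -2 ≤ x := by nlinarith
  have hy1 : y ≤ 2 := by nlinarith
  have hy2 : -2 ≤ y := by nlinarith
  by_cases h1 : x ^ 2 ≤ 1 ∧ y ^ 2 ≤ 1
  · refine ⟨⟨x, 0⟩, ⟨0, -y⟩, symbol_small hq5 _ _ (by nlinarith), symbol_small hq5 _ _ (by nlinarith), ?_⟩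
    ext <;> simp
  · refine ⟨⟨x / 2, y / 2⟩, ⟨-(x / 2), -(y / 2)⟩, symbol_small hq5 _ _ ?_,
      symbol_small hq5 _ _ ?_, ?_⟩
    · interval_cases x <;> interval_cases y <;> simp_all
    · interval_cases x <;> interval_cases y <;> simp_all
    · interval_cases x <;> interval_cases y <;> simp_all <;> ext <;> simp

lemma round_ex (P n : ℤ) (hn : 0 < n) : ∃ k : ℤ, 2 * |P - k * n| ≤ n := by
  refine ⟨(2 * P + n) / (2 * n), ?_⟩
  have h1 := Int.emod_nonneg (2 * P + n) (b := 2 * n) (by omega)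
  have h2 := Int.emod_lt_of_pos (2 * P + n) (b := 2 * n) (by omega)
  have h3 := Int.mul_ediv_add_emod (2 * P + n) (2 * n)
  set k := (2 * P + n) / (2 * n)
  have h4 : 2 * n * k = 2 * (k * n) := by ring
  rw [h4] at h3
  rcases abs_cases (P - k * n) with ⟨h, _⟩ | ⟨h, _⟩ <;> rw [h] <;> omega

lemma norm_eq (d : GaussianInt) : d.norm = d.re * d.re + d.im * d.im := by
  rw [Zsqrtd.norm_def]; ring

lemma mul_star_self_eq (d : GaussianInt) : d * star d = (d.norm : GaussianInt) := by
  rw [Zsqrtd.norm_eq_mul_conj]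

lemma re_icast_mul (n : ℤ) (d : GaussianInt) : ((n : GaussianInt) * d).re = n * d.re := by
  simp

lemma im_icast_mul (n : ℤ) (d : GaussianInt) : ((n : GaussianInt) * d).im = n * d.im := by
  simp

/-- Second component, small case. -/
lemma small_case_s6 {q a b c b' : GaussianInt} (hq5 : 5 ≤ q.norm)
    (hM0 : 0 < b.norm) (hMn : b.norm ≤ a.norm) (hM8 : b.norm < 8)
    (hc : 2 * c.norm ≤ a.norm) (hdet : c * b - b' * a = 1) : IsValidDiff q b' := by
  apply diff_small hq5
  have hM5 : b.norm ≤ 5 := by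
    have hb := norm_eq b
    by_contra hcon
    push Not at hcon
    have h1 : b.re ≤ 2 := by nlinarith
    have h2 : -2 ≤ b.re := by nlinarith
    have h3 : b.im ≤ 2 := by nlinarith
    have h4 : -2 ≤ b.im := by nlinarith
    obtain ⟨x, y⟩ := b
    simp only at *
    interval_cases x <;> interval_cases y <;> omega
  have e1 : (b' * a).norm = (c * b - 1).norm := by
    congr 1; linear_combination -hdet
  rw [Zsqrtd.norm_mul] at e1
  have e2 : (c * b - 1).norm = (c * b).norm - 2 * (c * b).re + 1 := by
    rw [norm_eq, norm_eq]
    simp only [Zsqrtd.re_sub, Zsqrtd.im_sub, Zsqrtd.re_one, Zsqrtd.im_one]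
    ring
  have e3 : (c * b).re ^ 2 ≤ (c * b).norm := by
    rw [norm_eq]; nlinarith [sq_nonneg (c * b).im]
  have e4 : (c * b).norm = c.norm * b.norm := Zsqrtd.norm_mul _ _
  have e5 : 2 * (c.norm * b.norm) ≤ a.norm * b.norm := by nlinarith
  have e6 : -(4 * (c * b).re) ≤ (c * b).re ^ 2 + 4 := by nlinarith [sq_nonneg ((c * b).re + 2)]
  have e7 : 4 * (b'.norm * a.norm) ≤ 3 * (a.norm * b.norm) + 12 := by
    rw [e1, e2]; linarith
  by_contra hcon
  push Not at hcon
  have e8 : 5 * a.norm ≤ b'.norm * a.norm := by nlinarith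
  generalize a.norm = n at *
  generalize b.norm = M at *
  interval_cases M <;> omega

/-- Second component, large case. -/
lemma large_case {q a b c b' : GaussianInt} (hb : IsValidDiff q b)
    (hMn : b.norm ≤ a.norm) (hM8 : 8 ≤ b.norm)
    (hP : 2 * |(c * star a).re| ≤ a.norm) (hQ : 2 * |(c * star a).im| ≤ a.norm)
    (hdet : c * b - b' * a = 1) : IsValidDiff q b' := by
  apply diff_of_l1 hb (by omega)
  have hcsa : c * star a = ⟨(c * star a).re, (c * star a).im⟩ := rfl
  have hna := mul_star_self_eq a
  have hnb := mul_star_self_eq b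
  have hab : (a.norm : GaussianInt) * (b' * star b) =
      (b.norm : GaussianInt) * (c * star a) - star a * star b := by
    rw [← hna, ← hnb]
    linear_combination -(star a * star b) * hdet
  have hgh : (star a * star b).norm = a.norm * b.norm := by
    rw [Zsqrtd.norm_mul, Zsqrtd.norm_conj, Zsqrtd.norm_conj]
  rw [norm_eq] at hgh
  have hre := congrArg Zsqrtd.re hab
  have him := congrArg Zsqrtd.im hab
  rw [Zsqrtd.re_sub, re_icast_mul, re_icast_mul] at hre
  rw [Zsqrtd.im_sub, im_icast_mul, im_icast_mul] at him
  -- the corner estimate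
  have hT : a.norm ≤ (a.norm - 2 * |(c * star a).re|) ^ 2 +
      (a.norm - 2 * |(c * star a).im|) ^ 2 := by
    have hsg : ∀ x : ℤ, ∃ s : ℤ, ∀ n, (s * n - 2 * x) ^ 2 = (n - 2 * |x|) ^ 2 := by
      intro x
      rcases abs_cases x with ⟨h, _⟩ | ⟨h, _⟩
      · exact ⟨1, fun n => by rw [h]; ring⟩
      · exact ⟨-1, fun n => by rw [h]; ring⟩
    obtain ⟨s, hs⟩ := hsg (c * star a).re
    obtain ⟨t, ht⟩ := hsg (c * star a).im
    rw [← hs, ← ht]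
    set η : GaussianInt := ⟨s, t⟩ * a - 2 * c with hη
    have h1 : η * star a = (a.norm : GaussianInt) * ⟨s, t⟩ - (2 : ℤ) * (c * star a) := by
      rw [hη, ← hna]; push_cast; ring
    have h2 : η.norm * a.norm = (s * a.norm - 2 * (c * star a).re) ^ 2 +
        (t * a.norm - 2 * (c * star a).im) ^ 2 := by
      rw [← Zsqrtd.norm_conj a, ← Zsqrtd.norm_mul, norm_eq, h1, Zsqrtd.re_sub, Zsqrtd.im_sub,
        re_icast_mul, re_icast_mul, im_icast_mul,
        im_icast_mul, Zsqrtd.norm_conj]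
      ring
    rw [← h2]
    have h3 : η ≠ 0 := by
      intro h0
      have hd : (2 : GaussianInt) = a * (⟨s, t⟩ * b - 2 * b') := by
        have : (2 : GaussianInt) * c = ⟨s, t⟩ * a := by linear_combination -h0
        linear_combination -2 * hdet + b * this
      have hd' := congrArg Zsqrtd.norm hd
      rw [Zsqrtd.norm_mul] at hd'
      have h4 : (2 : GaussianInt).norm = 4 := by decide
      rw [h4] at hd'
      have := Int.le_of_dvd (by norm_num) (Dvd.intro _ hd'.symm)
      omega
    have h5 : 0 < η.norm := GaussianInt.norm_pos.2 h3
    nlinarith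
  set P := (c * star a).re
  set Q := (c * star a).im
  set g := (star a * star b).re
  set k := (star a * star b).im
  set X := (b' * star b).re
  set Y := (b' * star b).im
  generalize a.norm = n at *
  generalize b.norm = M at *
  have hX : n * |X| ≤ M * |P| + |g| := by
    have := abs_sub (M * P) g
    rw [← hre, abs_mul, abs_mul, abs_of_nonneg (show 0 ≤ n by omega),
      abs_of_nonneg (show 0 ≤ M by omega)] at this
    exact this
  have hY : n * |Y| ≤ M * |Q| + |k| := by
    have := abs_sub (M * Q) k
    rw [← him, abs_mul, abs_mul, abs_of_nonneg (show 0 ≤ n by omega),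
      abs_of_nonneg (show 0 ≤ M by omega)] at this
    exact this
  have hg2 : |g| * |g| = g * g := abs_mul_abs_self g
  have hk2 : |k| * |k| = k * k := abs_mul_abs_self k
  have hfin : 2 * (|g| + |k|) ≤ M * (2 * (n - |P| - |Q|)) := by
    have h0 : 0 ≤ M * (2 * (n - |P| - |Q|)) := mul_nonneg (by omega) (by omega)
    refine abs_le_of_sq_le_sq' ?_ h0 |>.2
    have h1 : (2 * (|g| + |k|)) ^ 2 ≤ 8 * (n * M) := by
      nlinarith [sq_nonneg (|g| - |k|)]
    have h2 : n ≤ (2 * (n - |P| - |Q|)) ^ 2 := by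
      have := mul_nonneg (show 0 ≤ n - 2 * |P| by omega) (show 0 ≤ n - 2 * |Q| by omega)
      nlinarith
    have h3 : 8 * (n * M) ≤ M ^ 2 * n := by nlinarith [mul_nonneg (show 0 ≤ n by omega) (show 0 ≤ M by omega)]
    calc _ ≤ _ := h1
      _ ≤ _ := h3
      _ ≤ M ^ 2 * (2 * (n - |P| - |Q|)) ^ 2 := mul_le_mul_of_nonneg_left h2 (sq_nonneg M)
      _ = _ := by ring
  have hn0 : 0 < n := by omega
  refine le_of_mul_le_mul_left ?_ hn0
  linarith

lemma main_le (q : GaussianInt) (hq5 : 5 ≤ q.norm) (a b : GaussianInt)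
    (hA : IsValidDiff q a) (hB : IsValidDiff q b) (ha : a ≠ 0) (hb : b ≠ 0)
    (hco : IsCoprime a b) (hle : b.norm ≤ a.norm) :
    ∃ a' b' : GaussianInt, IsValidDiff q a' ∧ IsValidDiff q b' ∧ a' * b - b' * a = 1 := by
  obtain ⟨u, v, huv⟩ := hco
  have hn0 : 0 < a.norm := GaussianInt.norm_pos.2 ha
  obtain ⟨k1, hk1⟩ := round_ex (v * star a).re a.norm hn0
  obtain ⟨k2, hk2⟩ := round_ex (v * star a).im a.norm hn0
  set k : GaussianInt := ⟨k1, k2⟩ with hk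
  have hcs : (v - k * a) * star a = v * star a - (a.norm : GaussianInt) * k := by
    rw [← mul_star_self_eq]; ring
  have hP : 2 * |((v - k * a) * star a).re| ≤ a.norm := by
    rw [hcs, Zsqrtd.re_sub, re_icast_mul, mul_comm a.norm]; exact hk1
  have hQ : 2 * |((v - k * a) * star a).im| ≤ a.norm := by
    rw [hcs, Zsqrtd.im_sub, im_icast_mul, mul_comm a.norm]; exact hk2
  have hdet : (v - k * a) * b - (-u - k * b) * a = 1 := by linear_combination huv
  refine ⟨v - k * a, -u - k * b, diff_of_l1 hA hn0 (by omega), ?_, hdet⟩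
  rcases lt_or_ge b.norm 8 with h8 | h8
  · refine small_case_s6 hq5 (GaussianInt.norm_pos.2 hb) hle h8 ?_ hdet
    have h1 : (v - k * a).norm * a.norm = ((v - k * a) * star a).re * ((v - k * a) * star a).re
        + ((v - k * a) * star a).im * ((v - k * a) * star a).im := by
      rw [← norm_eq, Zsqrtd.norm_mul, Zsqrtd.norm_conj]
    rw [← abs_mul_abs_self ((v - k * a) * star a).re,
      ← abs_mul_abs_self ((v - k * a) * star a).im] at h1
    have p0 := abs_nonneg ((v - k * a) * star a).re
    have q0 := abs_nonneg ((v - k * a) * star a).im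
    refine le_of_mul_le_mul_right ?_ hn0
    nlinarith [mul_self_le_mul_self (by positivity) hP, mul_self_le_mul_self (by positivity) hQ]
  · exact large_case hB hle h8 hP hQ hdet

/-- Let `q` be a Gaussian prime with `N(q) ≥ 5` and let `(δA, δB)` be a
distance-valid difference pair with `δA ≠ 0`, `δB ≠ 0` and `gcd(δA, δB)` a unit (a nontrivial
characteristic difference). Then there exists a distance-valid difference pair `(δA', δB')`
with `gcd(δA', δB')` a unit such that `N(δA'·δB − δB'·δA) = 1`. -/
theorem stmt6 (q : GaussianInt) (hq : Prime q) (hq5 : 5 ≤ q.norm)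
    (δA δB : GaussianInt) (h : IsDistanceValidPair q δA δB)
    (hA : δA ≠ 0) (hB : δB ≠ 0) (hgcd : IsUnit (EuclideanDomain.gcd δA δB)) :
    ∃ δA' δB' : GaussianInt, IsDistanceValidPair q δA' δB' ∧
      IsUnit (EuclideanDomain.gcd δA' δB') ∧
      (δA' * δB - δB' * δA).norm = 1 := by
  obtain ⟨hvA, hvB, -⟩ := h
  have hco : IsCoprime δA δB := EuclideanDomain.gcd_isUnit_iff.1 hgcd
  have hex : ∃ a' b' : GaussianInt, IsValidDiff q a' ∧ IsValidDiff q b' ∧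
      ∃ e : GaussianInt, e * e = 1 ∧ a' * δB - b' * δA = e := by
    rcases le_total δB.norm δA.norm with hle | hle
    · obtain ⟨a', b', h1, h2, h3⟩ := main_le q hq5 δA δB hvA hvB hA hB hco hle
      exact ⟨a', b', h1, h2, 1, by ring, h3⟩
    · obtain ⟨b', a', h1, h2, h3⟩ := main_le q hq5 δB δA hvB hvA hB hA hco.symm hle
      exact ⟨a', b', h2, h1, -1, by ring, by linear_combination -h3⟩
  obtain ⟨a', b', h1, h2, e, he, h3⟩ := hex
  refine ⟨a', b', ⟨h1, h2, ?_⟩, ?_, ?_⟩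
  · intro h0
    rw [Prod.mk.injEq] at h0
    rw [h0.1, h0.2] at h3
    have : e = 0 := by rw [← h3]; ring
    rw [this] at he
    simp at he
  · rw [EuclideanDomain.gcd_isUnit_iff]
    exact ⟨δB * e, -δA * e, by linear_combination e * h3 + he⟩
  · rw [h3]
    have := congrArg Zsqrtd.norm he
    rw [Zsqrtd.norm_mul, Zsqrtd.norm_one] at this
    have h0 := GaussianInt.norm_nonneg e
    nlinarith
end

section
/- Let κ, τ, γ, δ be Gaussian integers with gcd(κ, τ) a unit and gcd(γ, δ) a unit, and set Ξ = κ·δ − τ·γ. If N(Ξ) = 5, then there exists exactly one ε ∈ {1, −1, i, −i} such that Ξ ∣ κ + ε·γ and Ξ ∣ τ + ε·δ. -/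
open GaussianInt

lemma dvd_crit (x w : GaussianInt) (hx : x.norm = 5)
    (h1 : (5 : ℤ) ∣ w.re * x.re + w.im * x.im) (h2 : (5 : ℤ) ∣ w.im * x.re - w.re * x.im) :
    x ∣ w := by
  obtain ⟨a, ha⟩ := h1
  obtain ⟨b, hb⟩ := h2
  rw [Zsqrtd.norm_def] at hx
  refine ⟨⟨a, b⟩, ?_⟩
  apply Zsqrtd.ext
  · simp only [Zsqrtd.re_mul]
    have : 5 * w.re = 5 * (x.re * a + -1 * x.im * b) := by
      linear_combination (-w.re) * hx + x.re * ha - x.im * hb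
    linarith
  · simp only [Zsqrtd.im_mul]
    have : 5 * w.im = 5 * (x.re * b + x.im * a) := by
      linear_combination (-w.im) * hx + x.im * ha + x.re * hb
    linarith

lemma pq_cases (p q : ℤ) (h : p * p - -1 * q * q = 5) :
    (p = 1 ∨ p = -1) ∧ (q = 2 ∨ q = -2) ∨ (p = 2 ∨ p = -2) ∧ (q = 1 ∨ q = -1) := by
  have b1 : p ≤ 2 := by nlinarith [mul_self_nonneg q]
  have b2 : -2 ≤ p := by nlinarith [mul_self_nonneg q]
  have b3 : q ≤ 2 := by nlinarith [mul_self_nonneg p]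
  have b4 : -2 ≤ q := by nlinarith [mul_self_nonneg p]
  interval_cases p <;> interval_cases q <;> revert h <;> norm_num

lemma dvd_crit2 (x w : GaussianInt) (hx : x.norm = 5)
    (h1 : (5 : ℤ) ∣ w.re * x.re + w.im * x.im) : x ∣ w := by
  refine dvd_crit x w hx h1 ?_
  rw [Zsqrtd.norm_def] at hx
  have := pq_cases _ _ hx
  clear hx
  generalize x.re = p at *
  generalize x.im = q at *
  rcases this with ⟨rfl | rfl, rfl | rfl⟩ | ⟨rfl | rfl, rfl | rfl⟩ <;> omega

lemma residues_int (t p q : ℤ) (h : p * p - -1 * q * q = 5) :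
    5 ∣ t ∨ 5 ∣ t + p ∨ 5 ∣ t - p ∨ 5 ∣ t + q ∨ 5 ∣ t - q := by
  have ht : t % 5 = 0 ∨ t % 5 = 1 ∨ t % 5 = 2 ∨ t % 5 = 3 ∨ t % 5 = 4 := by omega
  rcases pq_cases _ _ h with ⟨rfl | rfl, rfl | rfl⟩ | ⟨rfl | rfl, rfl | rfl⟩ <;>
    rcases ht with ht | ht | ht | ht | ht <;> omega

lemma residues (x w : GaussianInt) (hx : x.norm = 5) :
    x ∣ w ∨ x ∣ w + 1 ∨ x ∣ w + -1 ∨ x ∣ w + ⟨0, 1⟩ ∨ x ∣ w + ⟨0, -1⟩ := by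
  have hx' := hx
  rw [Zsqrtd.norm_def] at hx'
  refine (residues_int (w.re * x.re + w.im * x.im) _ _ hx').imp (dvd_crit2 _ _ hx)
    (Or.imp (fun h => dvd_crit2 _ _ hx ?_) (Or.imp (fun h => dvd_crit2 _ _ hx ?_)
    (Or.imp (fun h => dvd_crit2 _ _ hx ?_) (fun h => dvd_crit2 _ _ hx ?_)))) <;>
  · convert h using 1
    simp only [Zsqrtd.re_add, Zsqrtd.im_add, Zsqrtd.re_neg, Zsqrtd.im_neg, Zsqrtd.re_one,
      Zsqrtd.im_one]
    ring

/-- Let `κ, τ, γ, δ` be Gaussian integers with `gcd(κ, τ)` a unit and `gcd(γ, δ)`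
a unit, and set `Ξ = κ·δ − τ·γ`. If `N(Ξ) = 5`, then there exists exactly one
`ε ∈ {1, −1, i, −i}` such that `Ξ ∣ κ + ε·γ` and `Ξ ∣ τ + ε·δ`. -/
theorem stmt9 (κ τ γ δ : GaussianInt)
    (h1 : IsUnit (EuclideanDomain.gcd κ τ)) (h2 : IsUnit (EuclideanDomain.gcd γ δ))
    (hnorm : (κ * δ - τ * γ).norm = 5) :
    ∃! ε : GaussianInt,
      ε ∈ ({1, -1, ⟨0, 1⟩, ⟨0, -1⟩} : Set GaussianInt) ∧
      (κ * δ - τ * γ) ∣ κ + ε * γ ∧ (κ * δ - τ * γ) ∣ τ + ε * δ := by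
  obtain ⟨a, b, hab⟩ := EuclideanDomain.gcd_isUnit_iff.1 h1
  obtain ⟨c, d, hcd⟩ := EuclideanDomain.gcd_isUnit_iff.1 h2
  generalize hX : κ * δ - τ * γ = X at *
  have k1 : κ = (c * κ + d * τ) * γ + d * X := by
    linear_combination (-κ) * hcd + d * hX
  have k2 : τ = (c * κ + d * τ) * δ - c * X := by
    linear_combination (-τ) * hcd - c * hX
  have hex : ∀ ε, X ∣ (c * κ + d * τ) + ε → X ∣ κ + ε * γ ∧ X ∣ τ + ε * δ := by
    rintro ε ⟨m, hm⟩
    exact ⟨⟨m * γ + d, by linear_combination k1 + γ * hm⟩,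
      ⟨m * δ - c, by linear_combination k2 + δ * hm⟩⟩
  have hnd : ¬ X ∣ 1 := by
    rintro ⟨m, hm⟩
    have := congrArg Zsqrtd.norm hm
    rw [Zsqrtd.norm_mul, hnorm, Zsqrtd.norm_one] at this
    omega
  apply existsUnique_of_exists_of_unique
  · rcases residues X (c * κ + d * τ) hnorm with h | h | h | h | h
    · exfalso
      obtain ⟨m, hm⟩ := h
      exact hnd ⟨a * (m * γ + d) + b * (m * δ - c), by
        linear_combination -hab + a * k1 + b * k2 + (a * γ + b * δ) * hm⟩
    · exact ⟨_, by simp, hex _ h⟩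
    · exact ⟨_, by simp, hex _ h⟩
    · exact ⟨_, by simp, hex _ h⟩
    · exact ⟨_, by simp, hex _ h⟩
  · rintro e f ⟨he, ⟨m, hm⟩, ⟨n, hn⟩⟩ ⟨hf, ⟨m', hm'⟩, ⟨n', hn'⟩⟩
    have hd : e - f = X * (c * (m - m') + d * (n - n')) := by
      linear_combination (-(e - f)) * hcd + c * (hm - hm') + d * (hn - hn')
    have hN := congrArg Zsqrtd.norm hd
    rw [Zsqrtd.norm_mul, hnorm] at hN
    generalize Zsqrtd.norm (c * (m - m') + d * (n - n')) = z at hN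
    clear hd hm hn hm' hn'
    simp only [Set.mem_insert_iff, Set.mem_singleton_iff] at he hf
    rcases he with rfl | rfl | rfl | rfl <;> rcases hf with rfl | rfl | rfl | rfl <;>
      first
      | rfl
      | (exfalso; simp [Zsqrtd.norm_def] at hN; omega)
end

section
/- Let q be a Gaussian prime with N(q) ≥ 5 and regard the set Λ_q of valid differences as a subset of ℂ via the complex embedding. Every Gaussian integer whose complex embedding lies in the convex hull of Λ_q (taken in ℂ viewed as a real vector space) is itself a valid difference. -/
open GaussianInt

theorem tc_re (w : GaussianInt) : (toComplex w).re = w.re := (intCast_re w).symm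

theorem tc_im (w : GaussianInt) : (toComplex w).im = w.im := (intCast_im w).symm

/-- Twice the signed area of a triangle of Gaussian integers. -/
def triDet (a b c : GaussianInt) : ℤ :=
  (b.re - a.re) * (c.im - a.im) - (b.im - a.im) * (c.re - a.re)

/-- If the first coefficient is at least one, subtract the first vertex. -/
theorem step_ge_one (C : Set ℂ) (hC : Convex ℝ C) (a b c d : GaussianInt)
    (ha : toComplex a ∈ C) (hb : toComplex b ∈ C) (hc : toComplex c ∈ C)
    (x y z : ℝ) (hx : 1 ≤ x) (hy : 0 ≤ y) (hz : 0 ≤ z) (hs : x + y + z = 2)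
    (hd : toComplex d = x • toComplex a + y • toComplex b + z • toComplex c) :
    ∃ w w' : GaussianInt, toComplex w ∈ C ∧ toComplex w' ∈ C ∧ d = w + w' := by
  refine ⟨a, d - a, ha, ?_, by ring⟩
  have := hC.sum_mem (t := Finset.univ) (w := ![x - 1, y, z])
    (z := ![toComplex a, toComplex b, toComplex c])
    (by intro i _; fin_cases i <;> simp <;> linarith)
    (by simp [Fin.sum_univ_three]; linarith)
    (by intro i _; fin_cases i <;> simp [ha, hb, hc])
  convert this using 1
  simp only [Fin.sum_univ_three, map_sub, hd]
  simp
  ring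

/-- Induction step: the first barycentric coordinate of the interior point is the largest. -/
theorem step_max (C : Set ℂ) (n : ℕ)
    (ih : ∀ m < n, ∀ (a b c d : GaussianInt), (triDet a b c).natAbs = m → triDet a b c ≠ 0 →
      toComplex a ∈ C → toComplex b ∈ C → toComplex c ∈ C →
      ∀ x y z : ℝ, 0 ≤ x → 0 ≤ y → 0 ≤ z → x + y + z = 2 →
      toComplex d = x • toComplex a + y • toComplex b + z • toComplex c →
      ∃ w w' : GaussianInt, toComplex w ∈ C ∧ toComplex w' ∈ C ∧ d = w + w')
    (a b c d p : GaussianInt) (hn : (triDet a b c).natAbs = n) (h0 : triDet a b c ≠ 0)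
    (hb : toComplex b ∈ C) (hc : toComplex c ∈ C) (hp : toComplex p ∈ C)
    (hpd : d = a + b + c - p)
    (x y z : ℝ) (hx : 0 < x) (hy : 0 < y) (hz : 0 < z) (hs : x + y + z = 1)
    (hpe : toComplex p = x • toComplex a + y • toComplex b + z • toComplex c)
    (hxy : y ≤ x) (hxz : z ≤ x) :
    ∃ w w' : GaussianInt, toComplex w ∈ C ∧ toComplex w' ∈ C ∧ d = w + w' := by
  have hre := congrArg Complex.re hpe
  have him := congrArg Complex.im hpe
  simp [-intCast_re, -intCast_im, tc_re, tc_im] at hre him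
  have hx' : x = 1 - y - z := by linarith
  have hdet : (triDet p b c : ℝ) = x * (triDet a b c : ℝ) := by
    unfold triDet
    push_cast
    rw [hre, him, hx']
    ring
  have h0' : (triDet a b c : ℝ) ≠ 0 := by exact_mod_cast h0
  have hlt : (triDet p b c).natAbs < n := by
    rw [← hn]
    have : |(triDet p b c : ℝ)| < |(triDet a b c : ℝ)| := by
      rw [hdet, abs_mul, abs_of_pos hx]
      have := abs_pos.2 h0'
      nlinarith
    have h2 : |triDet p b c| < |triDet a b c| := by exact_mod_cast this
    rw [Int.abs_eq_natAbs, Int.abs_eq_natAbs] at h2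
    exact_mod_cast h2
  refine ih _ hlt p b c d rfl ?_ hp hb hc ((1 - x) / x) (1 - y / x) (1 - z / x) ?_ ?_ ?_ ?_ ?_
  · intro h
    rw [h] at hdet
    simp [hx.ne', h0] at hdet
  · apply div_nonneg <;> linarith
  · have := (div_le_one hx).2 hxy
    linarith
  · have := (div_le_one hx).2 hxz
    linarith
  · field_simp
    linarith
  · rw [hpd, map_sub, map_add, map_add, hpe]
    have hxc : (x : ℂ) ≠ 0 := by exact_mod_cast hx.ne'
    simp only [Complex.real_smul]
    push_cast
    field_simp
    ring

theorem tri_key (C : Set ℂ) (hC : Convex ℝ C) (n : ℕ) :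
    ∀ (a b c d : GaussianInt), (triDet a b c).natAbs = n → triDet a b c ≠ 0 →
      toComplex a ∈ C → toComplex b ∈ C → toComplex c ∈ C →
      ∀ x y z : ℝ, 0 ≤ x → 0 ≤ y → 0 ≤ z → x + y + z = 2 →
      toComplex d = x • toComplex a + y • toComplex b + z • toComplex c →
      ∃ w w' : GaussianInt, toComplex w ∈ C ∧ toComplex w' ∈ C ∧ d = w + w' := by
  induction n using Nat.strong_induction_on with
  | _ n ih =>
  intro a b c d hn h0 ha hb hc x y z hx hy hz hs hd
  by_cases h1 : 1 ≤ x
  · exact step_ge_one C hC a b c d ha hb hc x y z h1 hy hz hs hd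
  by_cases h2 : 1 ≤ y
  · exact step_ge_one C hC b c a d hb hc ha y z x h2 hz hx (by linarith) (by rw [hd]; abel)
  by_cases h3 : 1 ≤ z
  · exact step_ge_one C hC c a b d hc ha hb z x y h3 hx hy (by linarith) (by rw [hd]; abel)
  push Not at h1 h2 h3
  have hpe : toComplex (a + b + c - d) =
      (1 - x) • toComplex a + (1 - y) • toComplex b + (1 - z) • toComplex c := by
    simp only [map_sub, map_add, hd, sub_smul, one_smul]
    abel
  have hp : toComplex (a + b + c - d) ∈ C := by
    have := hC.sum_mem (t := Finset.univ) (w := ![1 - x, 1 - y, 1 - z])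
      (z := ![toComplex a, toComplex b, toComplex c])
      (by intro i _; fin_cases i <;> simp <;> linarith)
      (by simp [Fin.sum_univ_three]; linarith)
      (by intro i _; fin_cases i <;> simp [ha, hb, hc])
    rw [hpe]
    simpa [Fin.sum_univ_three] using this
  have e1 : triDet b c a = triDet a b c := by unfold triDet; ring
  have e2 : triDet c a b = triDet a b c := by unfold triDet; ring
  by_cases k1 : x ≤ y ∧ x ≤ z
  · exact step_max C n ih a b c d _ hn h0 hb hc hp (by ring) (1 - x) (1 - y) (1 - z)
      (by linarith) (by linarith) (by linarith) (by linarith) hpe (by linarith) (by linarith)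
  by_cases k2 : y ≤ x ∧ y ≤ z
  · exact step_max C n ih b c a d _ (e1 ▸ hn) (e1 ▸ h0) hc ha hp (by ring)
      (1 - y) (1 - z) (1 - x)
      (by linarith) (by linarith) (by linarith) (by linarith) (by rw [hpe]; abel)
      (by linarith) (by linarith)
  · have k3 : z ≤ x ∧ z ≤ y := by grind
    exact step_max C n ih c a b d _ (e2 ▸ hn) (e2 ▸ h0) ha hb hp (by ring)
      (1 - z) (1 - x) (1 - y)
      (by linarith) (by linarith) (by linarith) (by linarith) (by rw [hpe]; abel)
      (by linarith) (by linarith)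

theorem triDet_ne_zero (a b c : GaussianInt)
    (h : AffineIndependent ℝ ![toComplex a, toComplex b, toComplex c]) : triDet a b c ≠ 0 := by
  intro h0
  have h0' : ((b.re - a.re) * (c.im - a.im) - (b.im - a.im) * (c.re - a.re) : ℝ) = 0 := by
    exact_mod_cast h0
  rw [affineIndependent_iff] at h
  have key : ∀ u v : ℝ, u • (toComplex b - toComplex a) + v • (toComplex c - toComplex a) = 0 →
      u = 0 ∧ v = 0 := by
    intro u v huv
    have := h Finset.univ ![-u - v, u, v] (by simp [Fin.sum_univ_three]; ring)
      (by
        simp [Fin.sum_univ_three]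
        simp at huv
        linear_combination huv)
    exact ⟨by simpa using this 1 (Finset.mem_univ _), by simpa using this 2 (Finset.mem_univ _)⟩
  have k1 := key (c.im - a.im) (-(b.im - a.im)) (by
    apply Complex.ext <;> simp [-intCast_re, -intCast_im, tc_re, tc_im] <;> linarith)
  have k2 := key (c.re - a.re) (-(b.re - a.re)) (by
    apply Complex.ext <;> simp [-intCast_re, -intCast_im, tc_re, tc_im] <;> linarith)
  have k3 := key 0 1 (by
    apply Complex.ext <;> simp [-intCast_re, -intCast_im, tc_re, tc_im]
    · exact k2.1
    · exact k1.1)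
  simp at k3

theorem hull_key (C : Set ℂ) (hC : Convex ℝ C) (d : GaussianInt)
    (hd : (1 / 2 : ℝ) • toComplex d ∈ convexHull ℝ (toComplex '' {w | toComplex w ∈ C})) :
    ∃ w w' : GaussianInt, toComplex w ∈ C ∧ toComplex w' ∈ C ∧ d = w + w' := by
  obtain ⟨ι, _, f, g, hf, hai, hg, hg1, hsum⟩ := eq_pos_convex_span_of_mem_convexHull hd
  have hcard : Fintype.card ι ≤ 3 := by
    have h1 := hai.card_le_finrank_succ
    have h2 := Submodule.finrank_le (vectorSpan ℝ (Set.range f))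
    rw [Complex.finrank_real_complex] at h2
    omega
  have hf' : ∀ i, ∃ w : GaussianInt, toComplex w ∈ C ∧ toComplex w = f i := by
    intro i
    obtain ⟨w, hw, hw'⟩ := hf ⟨i, rfl⟩
    exact ⟨w, hw, hw'⟩
  choose v hvC hvf using hf'
  obtain ⟨n, hn3, ⟨e⟩⟩ : ∃ n : ℕ, n ≤ 3 ∧ Nonempty (Fin n ≃ ι) :=
    ⟨_, hcard, ⟨(Fintype.equivFin ι).symm⟩⟩
  have hd2 : toComplex d = ∑ i : Fin n, (2 * g (e i)) • toComplex (v (e i)) := by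
    rw [Equiv.sum_comp e (fun i => (2 * g i) • toComplex (v i))]
    simp only [mul_smul, ← Finset.smul_sum, hvf, hsum]
    simp
  have hs2 : ∑ i : Fin n, 2 * g (e i) = 2 := by
    rw [Equiv.sum_comp e (fun i => 2 * g i), ← Finset.mul_sum, hg1, mul_one]
  interval_cases n
  · simp at hs2
  · simp at hs2 hd2
    exact step_ge_one C hC (v (e 0)) (v (e 0)) (v (e 0)) d (hvC _) (hvC _) (hvC _) 2 0 0
      (by norm_num) le_rfl le_rfl (by norm_num) (by rw [hd2, hs2]; simp)
  · simp only [Fin.sum_univ_two] at hs2 hd2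
    have p0 := hg (e 0)
    have p1 := hg (e 1)
    by_cases h : 1 ≤ 2 * g (e 0)
    · exact step_ge_one C hC (v (e 0)) (v (e 1)) (v (e 1)) d (hvC _) (hvC _) (hvC _)
        (2 * g (e 0)) (2 * g (e 1)) 0
        h (by linarith) le_rfl (by linarith) (by rw [hd2]; simp)
    · exact step_ge_one C hC (v (e 1)) (v (e 0)) (v (e 0)) d (hvC _) (hvC _) (hvC _)
        (2 * g (e 1)) (2 * g (e 0)) 0
        (by linarith) (by linarith) le_rfl (by linarith) (by rw [hd2]; simp [add_comm])
  · simp only [Fin.sum_univ_three] at hs2 hd2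
    have p0 := hg (e 0)
    have p1 := hg (e 1)
    have p2 := hg (e 2)
    refine tri_key C hC _ (v (e 0)) (v (e 1)) (v (e 2)) d rfl ?_ (hvC _) (hvC _) (hvC _)
      _ _ _ (by linarith) (by linarith) (by linarith) hs2 hd2
    apply triDet_ne_zero
    have := hai.comp_embedding e.toEmbedding
    have hfe : ![toComplex (v (e 0)), toComplex (v (e 1)), toComplex (v (e 2))] =
        f ∘ e.toEmbedding := by
      funext i
      fin_cases i <;> simp [hvf]
    rw [hfe]
    exact this

/-- The open square attached to `q`. -/
def sqr (q : GaussianInt) : Set ℂ :=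
  {z | 2 * |z.re * q.re + z.im * q.im| < q.norm ∧ 2 * |z.im * q.re - z.re * q.im| < q.norm}

theorem sqr_convex (q : GaussianInt) : Convex ℝ (sqr q) := by
  intro u hu v hv a b ha hb hab
  obtain ⟨hu1, hu2⟩ := hu
  obtain ⟨hv1, hv2⟩ := hv
  have aux : ∀ s t r N : ℝ, 2 * |s| < N → 2 * |t| < N → r = a * s + b * t → 2 * |r| < N := by
    intro s t r N hs ht hr
    have h1 : |r| ≤ a * |s| + b * |t| := by
      rw [hr]
      refine (abs_add_le _ _).trans ?_
      rw [abs_mul, abs_mul, abs_of_nonneg ha, abs_of_nonneg hb]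
    rcases ha.eq_or_lt with h | h
    · subst h
      have : b = 1 := by linarith
      subst this
      linarith
    · have hb' : b = 1 - a := by linarith
      subst hb'
      nlinarith
  refine ⟨aux _ _ _ _ hu1 hv1 ?_, aux _ _ _ _ hu2 hv2 ?_⟩ <;> simp <;> ring

theorem valid_iff (q w : GaussianInt) : IsValidSymbol q w ↔ toComplex w ∈ sqr q := by
  have e1 : (w * star q).re = w.re * q.re + w.im * q.im := by simp [Zsqrtd.re_mul]
  have e2 : (w * star q).im = w.im * q.re - w.re * q.im := by simp [Zsqrtd.im_mul]; ring
  unfold IsValidSymbol sqr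
  rw [e1, e2]
  simp only [Set.mem_ofPred_eq, tc_re, tc_im]
  norm_cast

theorem valid_neg (q w : GaussianInt) (h : IsValidSymbol q w) : IsValidSymbol q (-w) := by
  unfold IsValidSymbol at *
  simpa only [neg_mul, Zsqrtd.re_neg, Zsqrtd.im_neg, abs_neg] using h

/-- Let `q` be a Gaussian prime with `N(q) ≥ 5`, and regard the set `Λ_q` of
valid differences as a subset of `ℂ`. Every Gaussian integer whose complex embedding lies in
the convex hull of `Λ_q` (in `ℂ` as a real vector space) is itself a valid difference. -/
theorem stmt14 (q : GaussianInt) (hq : Prime q) (hq5 : 5 ≤ q.norm)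
    (δ : GaussianInt)
    (hδ : toComplex δ ∈ convexHull ℝ (toComplex '' {x : GaussianInt | IsValidDiff q x})) :
    IsValidDiff q δ := by
  have h1 : (1 / 2 : ℝ) • toComplex δ ∈
      convexHull ℝ (toComplex '' {w | toComplex w ∈ sqr q}) := by
    have hconv := (convex_convexHull ℝ (toComplex '' {w | toComplex w ∈ sqr q})).smul_preimage
      (1 / 2 : ℝ)
    refine convexHull_min ?_ hconv hδ
    rintro _ ⟨x, ⟨w, w', hw, hw', rfl⟩, rfl⟩
    have a1 : toComplex w ∈ convexHull ℝ (toComplex '' {w | toComplex w ∈ sqr q}) :=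
      subset_convexHull _ _ ⟨w, (valid_iff q w).1 hw, rfl⟩
    have a2 : toComplex (-w') ∈ convexHull ℝ (toComplex '' {w | toComplex w ∈ sqr q}) :=
      subset_convexHull _ _ ⟨-w', (valid_iff q _).1 (valid_neg q w' hw'), rfl⟩
    have := convex_convexHull ℝ _ a1 a2 (a := 1 / 2) (b := 1 / 2) (by norm_num) (by norm_num)
      (by norm_num)
    rw [← smul_add, ← map_add, ← sub_eq_add_neg] at this
    exact this
  obtain ⟨w, w', hw, hw', h⟩ := hull_key (sqr q) (sqr_convex q) δ h1
  exact ⟨w, -w', (valid_iff q w).2 hw, valid_neg q w' ((valid_iff q w').2 hw'), by rw [h]; ring⟩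
end

section
/- Let κ, τ, γ, δ be Gaussian integers with gcd(κ, τ) a unit and gcd(γ, δ) a unit. (i) If 2 divides κ·δ − τ·γ in ℤ[i], then there exists a unit ϑ ∈ {1, −1, i, −i} such that 2 ∣ κ + ϑ·γ and 2 ∣ τ + ϑ·δ. (ii) If 3 divides κ·δ − τ·γ in ℤ[i], then there exists a Gaussian integer ϑ with 1 ≤ N(ϑ) ≤ 2 such that 3 ∣ κ + ϑ·γ and 3 ∣ τ + ϑ·δ. -/
open GaussianInt

theorem aux_bezout (a b : GaussianInt) (h : IsUnit (EuclideanDomain.gcd a b)) :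
    ∃ c d : GaussianInt, a * c + b * d = 1 := by
  obtain ⟨u, hu⟩ := h.exists_right_inv
  rw [EuclideanDomain.gcd_eq_gcd_ab] at hu
  exact ⟨EuclideanDomain.gcdA a b * u, EuclideanDomain.gcdB a b * u, by rw [← hu]; ring⟩

/-- The vectors are proportional modulo `m`, with an invertible ratio. -/
theorem aux_ratio (m κ τ γ δ : GaussianInt)
    (h1 : IsUnit (EuclideanDomain.gcd κ τ)) (h2 : IsUnit (EuclideanDomain.gcd γ δ))
    (h : m ∣ κ * δ - τ * γ) :
    ∃ l μ : GaussianInt, m ∣ κ + l * γ ∧ m ∣ τ + l * δ ∧ m ∣ l * μ - 1 := by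
  obtain ⟨a, b, hab⟩ := aux_bezout _ _ h1
  obtain ⟨c, d, hcd⟩ := aux_bezout _ _ h2
  obtain ⟨k, hk⟩ := h
  refine ⟨-(c * κ + d * τ), -(a * γ + b * δ), ⟨d * k, ?_⟩, ⟨-c * k, ?_⟩,
    ⟨(b * c - a * d) * k, ?_⟩⟩
  · linear_combination d * hk - κ * hcd
  · linear_combination -c * hk - τ * hcd
  · linear_combination (b * c - a * d) * hk + hab + (a * κ + b * τ) * (hcd)

theorem aux_dvd (n : ℤ) (z : GaussianInt) :
    (n : GaussianInt) ∣ z ↔ n ∣ z.re ∧ n ∣ z.im := Zsqrtd.intCast_dvd n z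

theorem aux_swap (m κ γ l t : GaussianInt) (h : m ∣ κ + l * γ) (ht : m ∣ t - l) :
    m ∣ κ + t * γ := by
  have : κ + t * γ = (κ + l * γ) + (t - l) * γ := by ring
  rw [this]
  exact dvd_add h (ht.mul_right _)

theorem aux_two (l μ : GaussianInt) (h : (2 : GaussianInt) ∣ l * μ - 1) :
    ∃ t : GaussianInt, t ∈ ({1, -1, ⟨0, 1⟩, ⟨0, -1⟩} : Set GaussianInt) ∧
      (2 : GaussianInt) ∣ t - l := by
  have e : (2 : GaussianInt) = ((2 : ℤ) : GaussianInt) := by norm_num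
  rw [e] at h ⊢
  rw [aux_dvd] at h
  obtain ⟨x, y⟩ := l
  obtain ⟨p, q⟩ := μ
  simp only [Zsqrtd.re_sub, Zsqrtd.im_sub, Zsqrtd.re_mul, Zsqrtd.im_mul, Zsqrtd.re_one,
    Zsqrtd.im_one] at h
  obtain ⟨⟨r, hr⟩, ⟨s, hs⟩⟩ := h
  rcases Int.even_or_odd' x with ⟨u, rfl | rfl⟩ <;> rcases Int.even_or_odd' y with ⟨v, rfl | rfl⟩
  · exfalso
    have : 2 * (u * p - v * q - r) = 1 := by linarith
    omega
  · refine ⟨⟨0, 1⟩, by simp, (aux_dvd _ _).2 ⟨⟨-u, ?_⟩, ⟨-v, ?_⟩⟩⟩ <;> simp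
  · refine ⟨1, by simp, (aux_dvd _ _).2 ⟨⟨-u, ?_⟩, ⟨-v, ?_⟩⟩⟩ <;> simp
  · exfalso
    have : 2 * (r + s - 2 * 0 - (u * p - v * q + u * q + v * p + p)) = -1 := by linarith
    omega

theorem aux_three (l μ : GaussianInt) (h : (3 : GaussianInt) ∣ l * μ - 1) :
    ∃ t : GaussianInt, (1 ≤ t.norm ∧ t.norm ≤ 2) ∧ (3 : GaussianInt) ∣ t - l := by
  have e : (3 : GaussianInt) = ((3 : ℤ) : GaussianInt) := by norm_num
  rw [e] at h ⊢
  rw [aux_dvd] at h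
  obtain ⟨x, y⟩ := l
  obtain ⟨p, q⟩ := μ
  simp only [Zsqrtd.re_sub, Zsqrtd.im_sub, Zsqrtd.re_mul, Zsqrtd.im_mul, Zsqrtd.re_one,
    Zsqrtd.im_one] at h
  obtain ⟨⟨r, hr⟩, -⟩ := h
  have key : ∀ z : ℤ, ∃ u w : ℤ, w - z = 3 * u ∧ (w = 0 ∨ w = 1 ∨ w = -1) := by
    intro z
    have : z % 3 = 0 ∨ z % 3 = 1 ∨ z % 3 = 2 := by omega
    rcases this with h | h | h
    · exact ⟨-(z / 3), 0, by omega, by omega⟩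
    · exact ⟨-(z / 3), 1, by omega, by omega⟩
    · exact ⟨-(z / 3) - 1, -1, by omega, by omega⟩
  obtain ⟨u, w, hu, hw⟩ := key x
  obtain ⟨v, w', hv, hw'⟩ := key y
  refine ⟨⟨w, w'⟩, ?_, (aux_dvd _ _).2 ⟨⟨u, by simpa using hu⟩, ⟨v, by simpa using hv⟩⟩⟩
  rw [Zsqrtd.norm_def]
  by_cases h0 : w = 0 ∧ w' = 0
  · exfalso
    obtain ⟨rfl, rfl⟩ := h0
    obtain rfl : x = -3 * u := by linarith
    obtain rfl : y = -3 * v := by linarith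
    have : 3 * (-u * p + v * q - r) = 1 := by linarith
    omega
  · rcases hw with rfl | rfl | rfl <;> rcases hw' with rfl | rfl | rfl <;> simp_all

/-- Let `κ, τ, γ, δ` be Gaussian integers with `gcd(κ, τ)` a unit and
`gcd(γ, δ)` a unit. (i) If `2 ∣ κ·δ − τ·γ` in `ℤ[i]`, then there exists a unit
`ϑ ∈ {1, −1, i, −i}` with `2 ∣ κ + ϑ·γ` and `2 ∣ τ + ϑ·δ`. (ii) If `3 ∣ κ·δ − τ·γ` in `ℤ[i]`,
then there exists a Gaussian integer `ϑ` with `1 ≤ N(ϑ) ≤ 2` such that `3 ∣ κ + ϑ·γ` and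
`3 ∣ τ + ϑ·δ`. -/
theorem stmt15 (κ τ γ δ : GaussianInt)
    (h1 : IsUnit (EuclideanDomain.gcd κ τ)) (h2 : IsUnit (EuclideanDomain.gcd γ δ)) :
    ((2 : GaussianInt) ∣ κ * δ - τ * γ →
      ∃ ϑ : GaussianInt, ϑ ∈ ({1, -1, ⟨0, 1⟩, ⟨0, -1⟩} : Set GaussianInt) ∧
        (2 : GaussianInt) ∣ κ + ϑ * γ ∧ (2 : GaussianInt) ∣ τ + ϑ * δ) ∧
    ((3 : GaussianInt) ∣ κ * δ - τ * γ →
      ∃ ϑ : GaussianInt, 1 ≤ ϑ.norm ∧ ϑ.norm ≤ 2 ∧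
        (3 : GaussianInt) ∣ κ + ϑ * γ ∧ (3 : GaussianInt) ∣ τ + ϑ * δ) := by
  constructor
  · intro h
    obtain ⟨l, μ, hk, ht, hl⟩ := aux_ratio _ _ _ _ _ h1 h2 h
    obtain ⟨t, hm, hd⟩ := aux_two l μ hl
    exact ⟨t, hm, aux_swap _ _ _ _ _ hk hd, aux_swap _ _ _ _ _ ht hd⟩
  · intro h
    obtain ⟨l, μ, hk, ht, hl⟩ := aux_ratio _ _ _ _ _ h1 h2 h
    obtain ⟨t, hm, hd⟩ := aux_three l μ hl
    exact ⟨t, hm.1, hm.2, aux_swap _ _ _ _ _ hk hd, aux_swap _ _ _ _ _ ht hd⟩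
end
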